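/- arXiv:1810.10849 — 2 statements merged into one kernel-verified Lean document; each statement's English description precedes it below -/
import Mathlib

section
/- There is a constant C = C(d) > 0, depending only on the dimension d, with the following property: for every u₀ ∈ L²(ℝ^d), every T > 0, N > 0, ε ∈ (0,1), and every family (λ_n)_{n∈ℤ^d} ⊂ ℝ^d satisfying |λ_n − n/N| ≤ ε/N for all n ∈ ℤ^d, there exists R̃ ∈ L²(ℝ^d) with ‖R̃‖ ≤ C (ε + (1 + (TN²)^{-1/2}) (TN²)^{-d/4} e^{-TN²}) ‖u₀‖ such that the family (u(T, λ_n)·f_{N,n})_{n∈ℤ^d} is summable in L²(ℝ^d) and u(T,·) = Σ_{n∈ℤ^d} u(T, λ_n) f_{N,n} + R̃ in L²(ℝ^d), where u is the heat solution with initial datum u₀. -/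
open MeasureTheory Filter Topology Metric ENNReal NNReal

noncomputable section

/-- `sinc` with value 1 at 0. -/
def sinc' (x : ℝ) : ℝ := if x = 0 then 1 else Real.sin x / x

/-- The function `f_{N,n}(x) = ∏_j sin (π (N x_j - n_j)) / (π (N x_j - n_j))`. -/
def fN (d : ℕ) (N : ℝ) (n : Fin d → ℤ) (x : EuclideanSpace ℝ (Fin d)) : ℝ :=
  ∏ j, sinc' (Real.pi * (N * x j - n j))

/-- The lattice point `n / N` in `ℝ^d`. -/
def latticePt (d : ℕ) (N : ℝ) (n : Fin d → ℤ) : EuclideanSpace ℝ (Fin d) :=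
  WithLp.toLp 2 (fun j => (n j : ℝ) / N)

/-- The heat solution at time `t > 0` with initial datum `u₀ ∈ L²(ℝ^d)`:
`u(t,x) = (4πt)^{-d/2} ∫ e^{-|x-y|²/(4t)} u₀(y) dy`. -/
def heatSol (d : ℕ) (u₀ : EuclideanSpace ℝ (Fin d) → ℝ) (t : ℝ)
    (x : EuclideanSpace ℝ (Fin d)) : ℝ :=
  (4 * Real.pi * t) ^ (-(d : ℝ) / 2) * ∫ y, Real.exp (-‖x - y‖ ^ 2 / (4 * t)) * u₀ y

/-- The family `F` is summable in `L²(ℝ^d)` with sum `g`: the finite partial sums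
converge to `g` in the `L²` norm along the filter of finite subsets of `ℤ^d`. -/
def HasSumL2 (d : ℕ) {V : Type} [NormedAddCommGroup V]
    (F : (Fin d → ℤ) → EuclideanSpace ℝ (Fin d) → V)
    (g : EuclideanSpace ℝ (Fin d) → V) : Prop :=
  Tendsto (fun s : Finset (Fin d → ℤ) =>
    eLpNorm (fun x => g x - ∑ n ∈ s, F n x) 2 volume) atTop (𝓝 0)

/-- The closed cube `Q_r(0)` in `ℝ^d`, centered at the origin, of side length `2r`. -/
def Qcube (d : ℕ) (r : ℝ) : Set (EuclideanSpace ℝ (Fin d)) := {ξ | ∀ j, |ξ j| ≤ r}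

/-- The truncated Fourier integral, with the paper's normalization
`(2π)^{-d/2} ∫_{|x| ≤ R} e^{-i x·ξ} f(x) dx`. -/
def truncFT (d : ℕ) (f : EuclideanSpace ℝ (Fin d) → ℂ) (R : ℝ)
    (ξ : EuclideanSpace ℝ (Fin d)) : ℂ :=
  (((2 * Real.pi) ^ (-(d : ℝ) / 2) : ℝ) : ℂ) *
    ∫ x in closedBall (0 : EuclideanSpace ℝ (Fin d)) R,
      Complex.exp (-(Complex.I * ((inner ℝ x ξ : ℝ) : ℂ))) * f x

/-- `fhat` is the Fourier transform of `f ∈ L²(ℝ^d)` in the `L²` (Plancherel) sense: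
`fhat ∈ L²` and the Fourier integrals of the truncations of `f` converge to `fhat`
in the `L²` norm. -/
def IsL2Fourier (d : ℕ) (f fhat : EuclideanSpace ℝ (Fin d) → ℂ) : Prop :=
  MemLp fhat 2 volume ∧
    Tendsto (fun R : ℝ => eLpNorm (fun ξ => fhat ξ - truncFT d f R ξ) 2 volume)
      atTop (𝓝 0)

/-- The `L²(ℝ^d)` norm of a function, as a real number. -/
def l2norm (d : ℕ) {V : Type} [NormedAddCommGroup V]
    (f : EuclideanSpace ℝ (Fin d) → V) : ℝ :=
  (eLpNorm f 2 volume).toReal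

/-!
Rescaling by `N` reduces to the unit lattice and time `s = T N ^ 2`. By Poisson summation the
Fourier coefficients on the unit cube of the spectrum `V` of `u(s, ·)` periodised along `ℤ^d` are
the samples `u(s, n)`, while the sinc functions are the Fourier transforms of the characters
restricted to that cube. Hence the sinc series with exact samples differs from `u(s, ·)` only by
the part of `V` lying outside the unit cube and its aliases inside, which for `s ≥ 1` is damped at
least by `exp (-2 * s)`. Moving the samples by `ε` changes their `ℓ²` norm by at most a multiple of
`ε ‖u₀‖`: the heat kernel varies by at most a multiple of `ε` times the kernel at time
`4 * s`, and the Schur test applies because lattice sums of heat kernels are bounded. For `s ≤ 1`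
the same test bounds the `ℓ²` norm of the samples by a multiple of `s ^ (-d / 4) ‖u₀‖`, so the
whole series can be discarded.
-/

namespace HeatSampling

open scoped FourierTransform SchwartzMap ContDiff ComplexConjugate InnerProductSpace

local notation "L²(" α ")" => Lp ℂ 2 (volume : Measure α)

section FourierAgreement

variable {V : Type*} [NormedAddCommGroup V] [InnerProductSpace ℝ V] [FiniteDimensional ℝ V]
  [MeasurableSpace V] [BorelSpace V]

/- Both transforms act on Schwartz functions by moving `𝓕` to the other factor, so they have the
same integrals against test functions. -/
theorem Lp_fourier_ae_eq_fourier (f : L²(V)) (hf : Integrable f volume) :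
    (𝓕 f : L²(V)) =ᵐ[volume] 𝓕 (f : V → ℂ) := by
  have hcont : Continuous (𝓕 (f : V → ℂ)) :=
    VectorFourier.fourierIntegral_continuous Real.continuous_fourierChar continuous_inner hf
  refine ae_eq_of_integral_contDiff_smul_eq ((Lp.memLp _).locallyIntegrable (by norm_num))
    hcont.locallyIntegrable fun g hg hgc => ?_
  have hsupp : HasCompactSupport fun x => (g x : ℂ) :=
    hgc.comp_left (g := Complex.ofReal) Complex.ofReal_zero
  have hsmooth : ContDiff ℝ ∞ fun x => (g x : ℂ) := Complex.ofRealCLM.contDiff.comp hg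
  set ψ : 𝓢(V, ℂ) := hsupp.toSchwartzMap hsmooth
  have hL2 : ∫ x, 𝓕 ψ x • f x = ∫ x, ψ x • (𝓕 f : L²(V)) x := by
    simpa only [TemperedDistribution.fourier_apply, Lp.toTemperedDistribution_apply]
      using (congrArg (fun D => D ψ) (Lp.fourier_toTemperedDistribution_eq f))
  have hL1 : ∫ x, 𝓕 (ψ : V → ℂ) x • f x = ∫ x, ψ x • 𝓕 (f : V → ℂ) x :=
    (VectorFourier.integral_fourierIntegral_smul_eq_flip (L := innerₗ V)
      Real.continuous_fourierChar continuous_inner ψ.integrable hf).trans (by rw [flip_innerₗ]; rfl)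
  exact hL2.symm.trans hL1

theorem Lp_fourier_ae_eq_of_ae_eq {f : L²(V)} {g : V → ℂ} (hfg : f =ᵐ[volume] g)
    (hg : Integrable g volume) : (𝓕 f : L²(V)) =ᵐ[volume] 𝓕 g :=
  (Lp_fourier_ae_eq_fourier f ((integrable_congr hfg).2 hg)).trans
    (Eventually.of_forall fun x => Real.fourier_congr_ae hfg x)

end FourierAgreement

variable {ι : Type*}

section UnitCube

/-- The point of the integer lattice of `ℝ^ι` with coordinates `n`. -/
def intVec (n : ι → ℤ) : EuclideanSpace ℝ ι := WithLp.toLp 2 fun j => (n j : ℝ)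

@[simp]
lemma intVec_zero : intVec (0 : ι → ℤ) = 0 := by ext; simp [intVec]

variable (ι) in
/-- The centred half-open unit cube of `ℝ^ι`, a fundamental domain of the integer lattice. The
endpoints are written in the form used by Mathlib for the fundamental domains of `UnitAddTorus`. -/
def unitCube : Set (EuclideanSpace ℝ ι) := {ξ | ∀ j, ξ j ∈ Set.Ioc (-1 / 2 : ℝ) (-1 / 2 + 1)}

lemma pairwise_disjoint_unitCube_add_intVec :
    Pairwise (Function.onFun Disjoint fun k : ι → ℤ => (· - intVec k) ⁻¹' unitCube ι) := by
  intro k l hkl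
  refine Set.disjoint_left.2 fun ξ hk hl => hkl (funext fun j => ?_)
  obtain ⟨hk₁, hk₂⟩ := hk j
  obtain ⟨hl₁, hl₂⟩ := hl j
  simp only [intVec, PiLp.sub_apply] at hk₁ hk₂ hl₁ hl₂
  have hlt : (k j : ℝ) < l j + 1 := by linarith
  have hgt : (l j : ℝ) < k j + 1 := by linarith
  norm_cast at hlt hgt
  lia

lemma iUnion_unitCube_add_intVec : ⋃ k : ι → ℤ, (· - intVec k) ⁻¹' unitCube ι = Set.univ := by
  refine Set.eq_univ_of_forall fun ξ => Set.mem_iUnion.2 ⟨fun j => ⌈ξ j - 1 / 2⌉, fun j => ?_⟩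
  simp only [intVec, PiLp.sub_apply, Set.mem_Ioc]
  constructor <;> linarith [Int.ceil_lt_add_one (ξ j - 1 / 2), Int.le_ceil (ξ j - 1 / 2)]

lemma preimage_add_intVec_unitCube (k : ι → ℤ) :
    (· + intVec k) ⁻¹' ((· - intVec k) ⁻¹' unitCube ι) = unitCube ι := by
  ext; simp

lemma measurableSet_unitCube [Finite ι] : MeasurableSet (unitCube ι) :=
  (MeasurableSet.univ_pi' fun _ : ι => measurableSet_Ioc).preimage
    (MeasurableEquiv.toLp 2 (ι → ℝ)).symm.measurable

lemma measurableSet_unitCube_add_intVec [Finite ι] (k : ι → ℤ) :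
    MeasurableSet ((· - intVec k) ⁻¹' unitCube ι) := by
  have := Fintype.ofFinite ι
  exact measurableSet_unitCube.preimage (measurable_id.sub_const _)

variable [Fintype ι]

lemma measurePreserving_ofLp_unitCube :
    MeasurePreserving (MeasurableEquiv.toLp 2 (ι → ℝ)).symm (volume.restrict (unitCube ι))
      (Measure.pi fun _ => volume.restrict (Set.Ioc (-1 / 2 : ℝ) (-1 / 2 + 1))) := by
  rw [← Measure.restrict_pi_pi]
  convert! (EuclideanSpace.volume_preserving_symm_measurableEquiv_toLp ι).restrict_preimage
    (MeasurableSet.univ_pi fun _ => measurableSet_Ioc)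
  ext; simp [unitCube]

lemma volume_unitCube : volume (unitCube ι) = 1 := by
  simpa [Measure.pi_univ] using (measurePreserving_ofLp_unitCube (ι := ι)).measure_preimage
    MeasurableSet.univ.nullMeasurableSet

lemma norm_le_sqrt_card_of_mem_unitCube {ξ : EuclideanSpace ℝ ι} (hξ : ξ ∈ unitCube ι) :
    ‖ξ‖ ≤ √(Fintype.card ι) := by
  rw [EuclideanSpace.norm_eq]
  refine Real.sqrt_le_sqrt ?_
  calc ∑ j, ‖ξ j‖ ^ 2 ≤ ∑ _j : ι, (1 : ℝ) := Finset.sum_le_sum fun j _ => by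
        rw [Real.norm_eq_abs, sq_abs]
        nlinarith [(hξ j).1, (hξ j).2]
    _ = Fintype.card ι := by simp

lemma one_le_norm_intVec {k : ι → ℤ} (hk : k ≠ 0) : 1 ≤ ‖intVec k‖ := by
  obtain ⟨j, hj⟩ := Function.ne_iff.1 hk
  calc (1 : ℝ) ≤ |(k j : ℝ)| := by exact_mod_cast Int.one_le_abs hj
    _ = ‖intVec k j‖ := rfl
    _ ≤ ‖intVec k‖ := PiLp.norm_apply_le _ j

lemma one_half_le_norm_of_notMem_unitCube {ξ : EuclideanSpace ℝ ι} (hξ : ξ ∉ unitCube ι) :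
    1 / 2 ≤ ‖ξ‖ := by
  contrapose! hξ
  intro j
  have hj := abs_lt.1 ((PiLp.norm_apply_le ξ j).trans_lt hξ)
  constructor <;> linarith [hj.1, hj.2]

/- Coordinatewise `|k j| ≤ 2 |ξ j + k j|`, since `|ξ j| ≤ 1/2` and `k j` is an integer. -/
lemma norm_intVec_le_two_mul_norm_add {ξ : EuclideanSpace ℝ ι} (hξ : ξ ∈ unitCube ι)
    (k : ι → ℤ) : ‖intVec k‖ ≤ 2 * ‖ξ + intVec k‖ := by
  rw [← abs_of_nonneg (by positivity : 0 ≤ 2 * ‖ξ + intVec k‖), ← abs_norm, ← sq_le_sq, mul_pow,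
    EuclideanSpace.norm_sq_eq, EuclideanSpace.norm_sq_eq, Finset.mul_sum]
  refine Finset.sum_le_sum fun j _ => ?_
  obtain ⟨hlo, hhi⟩ := hξ j
  simp only [Real.norm_eq_abs, sq_abs, intVec, PiLp.add_apply]
  rcases lt_trichotomy (k j) 0 with hk | hk | hk
  · have : (k j : ℝ) ≤ -1 := by exact_mod_cast Int.le_sub_one_of_lt hk
    nlinarith
  · rw [hk, Int.cast_zero]
    nlinarith [sq_nonneg (ξ j + 0)]
  · have : (1 : ℝ) ≤ k j := by exact_mod_cast hk
    nlinarith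

theorem lintegral_eq_tsum_unitCube (f : EuclideanSpace ℝ ι → ℝ≥0∞) :
    ∫⁻ ξ, f ξ = ∑' k : ι → ℤ, ∫⁻ ξ in unitCube ι, f (ξ + intVec k) := by
  rw [← setLIntegral_univ, ← iUnion_unitCube_add_intVec,
    lintegral_iUnion measurableSet_unitCube_add_intVec pairwise_disjoint_unitCube_add_intVec]
  refine tsum_congr fun k => ?_
  rw [← (measurePreserving_add_right volume (intVec k)).setLIntegral_comp_preimage_emb
    (MeasurableEquiv.addRight (intVec k)).measurableEmbedding, preimage_add_intVec_unitCube]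

theorem hasSum_integral_unitCube {F : Type*} [NormedAddCommGroup F] [NormedSpace ℝ F]
    {f : EuclideanSpace ℝ ι → F} (hf : Integrable f volume) :
    HasSum (fun k : ι → ℤ => ∫ ξ in unitCube ι, f (ξ + intVec k)) (∫ ξ, f ξ) := by
  have hsum := hasSum_integral_iUnion measurableSet_unitCube_add_intVec
    pairwise_disjoint_unitCube_add_intVec hf.integrableOn
  rw [iUnion_unitCube_add_intVec, setIntegral_univ] at hsum
  refine hsum.congr_fun fun k => ?_
  simpa only [preimage_add_intVec_unitCube]
    using (measurePreserving_add_right volume (intVec k)).setIntegral_preimage_emb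
      (MeasurableEquiv.addRight (intVec k)).measurableEmbedding f ((· - intVec k) ⁻¹' unitCube ι)

/- `⟪n, k⟫` is an integer. -/
lemma fourierChar_inner_add_intVec (n k : ι → ℤ) (ξ : EuclideanSpace ℝ ι) :
    Real.fourierChar (inner ℝ (intVec n) (ξ + intVec k)) =
      Real.fourierChar (inner ℝ (intVec n) ξ) := by
  have hint : inner ℝ (intVec n) (intVec k) = ((∑ j, n j * k j : ℤ) : ℝ) := by
    simp [PiLp.inner_apply, intVec, mul_comm]
  have hchar : Real.fourierChar ((∑ j, n j * k j : ℤ) : ℝ) = 1 := by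
    rw [← Circle.coe_inj, Real.fourierChar_apply, Circle.coe_one, Complex.exp_eq_one_iff]
    exact ⟨∑ j, n j * k j, by push_cast; ring⟩
  rw [inner_add_right, AddChar.map_add_eq_mul, hint, hchar, mul_one]

end UnitCube

section CubeFourier

local instance : MeasureSpace UnitAddCircle := ⟨AddCircle.haarAddCircle⟩

local instance : Measure.IsAddHaarMeasure (volume : Measure UnitAddCircle) :=
  inferInstanceAs (Measure.IsAddHaarMeasure AddCircle.haarAddCircle)

local instance : IsProbabilityMeasure (volume : Measure UnitAddCircle) :=
  inferInstanceAs (IsProbabilityMeasure AddCircle.haarAddCircle)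

/-- The covering map `ℝ^ι → ℝ^ι / ℤ^ι`. -/
def toTorus (ξ : EuclideanSpace ℝ ι) : UnitAddTorus ι := fun j => (ξ j : UnitAddCircle)

/-- The section of `toTorus` with values in the unit cube. -/
def torusSection (t : UnitAddTorus ι) : EuclideanSpace ℝ ι :=
  WithLp.toLp 2 (UnitAddTorus.measurableEquivPiIoc (fun _ => (-1 / 2 : ℝ)) t).1

lemma measurable_torusSection : Measurable (torusSection (ι := ι)) :=
  (MeasurableEquiv.toLp 2 (ι → ℝ)).measurable.comp
    (measurable_subtype_coe.comp (UnitAddTorus.measurableEquivPiIoc _).measurable)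

lemma torusSection_toTorus {ξ : EuclideanSpace ℝ ι} (hξ : ξ ∈ unitCube ι) :
    torusSection (toTorus ξ) = ξ :=
  congrArg (fun x => WithLp.toLp 2 x.1)
    ((UnitAddTorus.measurableEquivPiIoc (fun _ : ι => (-1 / 2 : ℝ))).apply_symm_apply ⟨_, hξ⟩)

variable [Fintype ι]

lemma measurePreserving_toTorus :
    MeasurePreserving toTorus (volume.restrict (unitCube ι))
      (volume : Measure (UnitAddTorus ι)) := by
  convert! (measurePreserving_pi _ _ fun _ : ι =>
    AddCircle.measurePreserving_mk 1 (-1 / 2)).comp measurePreserving_ofLp_unitCube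
  simp [volume, AddCircle.haarAddCircle]

lemma mFourier_toTorus (n : ι → ℤ) (ξ : EuclideanSpace ℝ ι) :
    UnitAddTorus.mFourier n (toTorus ξ) = Real.fourierChar (inner ℝ (intVec n) ξ) := by
  simp only [UnitAddTorus.mFourier, ContinuousMap.coe_mk, toTorus, intVec, fourier_coe_apply,
    Real.fourierChar_apply, PiLp.inner_apply, ← Complex.exp_sum]
  congr 1
  simp only [Real.inner_apply, Complex.ofReal_mul, Complex.ofReal_sum, Finset.mul_sum,
    Finset.sum_mul]
  exact Finset.sum_congr rfl fun j _ => by push_cast; ring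

lemma eLpNorm_indicator_comp_toTorus {φ : UnitAddTorus ι → ℂ}
    (hφ : AEStronglyMeasurable φ volume) :
    eLpNorm ((unitCube ι).indicator (φ ∘ toTorus)) 2 volume = eLpNorm φ 2 volume := by
  rw [eLpNorm_indicator_eq_eLpNorm_restrict measurableSet_unitCube,
    eLpNorm_comp_measurePreserving hφ measurePreserving_toTorus]

lemma memLp_indicator_comp_toTorus (φ : L²(UnitAddTorus ι)) :
    MemLp ((unitCube ι).indicator (φ ∘ toTorus)) 2 volume :=
  (memLp_indicator_iff_restrict measurableSet_unitCube).2
    ((Lp.memLp φ).comp_measurePreserving measurePreserving_toTorus)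

lemma indicator_comp_toTorus_ae_eq {φ ψ : UnitAddTorus ι → ℂ} (h : φ =ᵐ[volume] ψ) :
    (unitCube ι).indicator (φ ∘ toTorus) =ᵐ[volume] (unitCube ι).indicator (ψ ∘ toTorus) :=
  (ae_eq_restrict_iff_indicator_ae_eq measurableSet_unitCube).1
    (measurePreserving_toTorus.quasiMeasurePreserving.ae_eq_comp h)

/-- The isometric embedding `L²(ℝ^ι / ℤ^ι) → L²(ℝ^ι)` which regards a function on the torus as a
function on the unit cube and extends it by zero. -/
def torusExtension : L²(UnitAddTorus ι) →ₗᵢ[ℂ] L²(EuclideanSpace ℝ ι) where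
  toFun φ := (memLp_indicator_comp_toTorus φ).toLp
  map_add' φ ψ := by
    rw [← MemLp.toLp_add, MemLp.toLp_eq_toLp_iff]
    refine (indicator_comp_toTorus_ae_eq (Lp.coeFn_add φ ψ)).trans
      (Eventually.of_forall fun ξ => ?_)
    by_cases hξ : ξ ∈ unitCube ι <;> simp [hξ]
  map_smul' c φ := by
    rw [RingHom.id_apply, ← MemLp.toLp_const_smul, MemLp.toLp_eq_toLp_iff]
    refine (indicator_comp_toTorus_ae_eq (Lp.coeFn_smul c φ)).trans
      (Eventually.of_forall fun ξ => ?_)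
    by_cases hξ : ξ ∈ unitCube ι <;> simp [hξ]
  norm_map' φ := by
    simp only [LinearMap.coe_mk, AddHom.coe_mk, Lp.norm_toLp]
    rw [eLpNorm_indicator_comp_toTorus (Lp.aestronglyMeasurable φ), Lp.norm_def]

lemma torusExtension_ae_eq {φ : L²(UnitAddTorus ι)} {ψ : UnitAddTorus ι → ℂ}
    (h : φ =ᵐ[volume] ψ) :
    torusExtension φ =ᵐ[volume] (unitCube ι).indicator (ψ ∘ toTorus) :=
  (memLp_indicator_comp_toTorus φ).coeFn_toLp.trans (indicator_comp_toTorus_ae_eq h)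

theorem mem_range_torusExtension {h : L²(EuclideanSpace ℝ ι)}
    (hh : ∀ᵐ ξ, ξ ∉ unitCube ι → h ξ = 0) : h ∈ Set.range (torusExtension (ι := ι)) := by
  have hm : AEStronglyMeasurable h volume := Lp.aestronglyMeasurable h
  set φ : UnitAddTorus ι → ℂ := hm.mk h ∘ torusSection
  have hφm : StronglyMeasurable φ :=
    hm.stronglyMeasurable_mk.comp_measurable measurable_torusSection
  have hφh : (unitCube ι).indicator (φ ∘ toTorus) =ᵐ[volume] h := by
    filter_upwards [hh, hm.ae_eq_mk] with ξ hzero hmk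
    by_cases hξ : ξ ∈ unitCube ι
    · simp [hξ, φ, torusSection_toTorus, hmk]
    · simp [hξ, hzero]
  have hφ : MemLp φ 2 volume := by
    refine ⟨hφm.aestronglyMeasurable, ?_⟩
    rw [← eLpNorm_indicator_comp_toTorus hφm.aestronglyMeasurable, eLpNorm_congr_ae hφh]
    exact Lp.eLpNorm_lt_top h
  exact ⟨hφ.toLp, Lp.ext ((torusExtension_ae_eq hφ.coeFn_toLp).trans hφh)⟩

/-- The `n`-th Fourier monomial `ξ ↦ e^{2πi n·ξ}` of the unit cube, extended by zero, as an element
of `L²(ℝ^ι)`. -/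
def cubeFourier (n : ι → ℤ) : L²(EuclideanSpace ℝ ι) :=
  torusExtension (UnitAddTorus.mFourierLp 2 n)

lemma cubeFourier_ae_eq (n : ι → ℤ) : cubeFourier n =ᵐ[volume]
    (unitCube ι).indicator fun ξ => (Real.fourierChar (inner ℝ (intVec n) ξ) : ℂ) := by
  refine (torusExtension_ae_eq (UnitAddTorus.coeFn_mFourierLp 2 n)).trans (Eventually.of_forall ?_)
  simp [Function.comp_def, mFourier_toTorus]

theorem orthonormal_cubeFourier : Orthonormal ℂ (cubeFourier (ι := ι)) :=
  UnitAddTorus.orthonormal_mFourier.comp_linearIsometry torusExtension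

theorem hasSum_inner_cubeFourier {h : L²(EuclideanSpace ℝ ι)}
    (hh : h ∈ closure {f : L²(EuclideanSpace ℝ ι) | ∀ᵐ ξ, ξ ∉ unitCube ι → f ξ = 0}) :
    HasSum (fun n => inner ℂ (cubeFourier n) h • cubeFourier n) h := by
  obtain ⟨φ, rfl⟩ : h ∈ Set.range (torusExtension (ι := ι)) :=
    closure_minimal (fun _ => mem_range_torusExtension)
      torusExtension.isometry.isClosedEmbedding.isClosed_range hh
  simpa [cubeFourier, HilbertBasis.repr_apply_apply]
    using (UnitAddTorus.mFourierBasis.hasSum_repr φ).mapL torusExtension.toContinuousLinearMap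

end CubeFourier

variable [Fintype ι]

section Sinc

lemma setIntegral_fourierChar_mul_eq_sinc (a : ℝ) :
    ∫ v in Set.Ioc (-1 / 2 : ℝ) (-1 / 2 + 1), (Real.fourierChar (a * v) : ℂ) =
      Real.sinc (Real.pi * a) := by
  rw [← intervalIntegral.integral_of_le (by norm_num)]
  rcases eq_or_ne a 0 with rfl | ha
  · simp
  have hexp (v : ℝ) : (Real.fourierChar (a * v) : ℂ) =
      Complex.exp ((2 * Real.pi * a * v : ℝ) * Complex.I) := by
    rw [Real.fourierChar_apply]; congr 1; push_cast; ring
  have hleft : 2 * Real.pi * a * (-1 / 2) = -(Real.pi * a) := by ring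
  have hright : 2 * Real.pi * a * (-1 / 2 + 1) = Real.pi * a := by ring
  simp only [hexp]
  rw [intervalIntegral.integral_comp_mul_left (fun t : ℝ => Complex.exp (t * Complex.I))
    (by positivity), hleft, hright, integral_exp_mul_I_eq_sinc, Complex.real_smul]
  have hπ : (Real.pi : ℂ) ≠ 0 := by exact_mod_cast Real.pi_ne_zero
  have ha' : (a : ℂ) ≠ 0 := by exact_mod_cast ha
  push_cast
  field_simp

lemma setIntegral_unitCube_prod (f : ι → ℝ → ℂ) :
    ∫ v in unitCube ι, ∏ j, f j (v j) = ∏ j, ∫ v in Set.Ioc (-1 / 2 : ℝ) (-1 / 2 + 1), f j v := by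
  rw [← integral_fintype_prod_eq_prod, ← measurePreserving_ofLp_unitCube.integral_comp']
  rfl

theorem fourier_indicator_unitCube (n : ι → ℤ) (x : EuclideanSpace ℝ ι) :
    𝓕 ((unitCube ι).indicator fun ξ => (Real.fourierChar (inner ℝ (intVec n) ξ) : ℂ)) x =
      ((∏ j, Real.sinc (Real.pi * (x j - n j)) : ℝ) : ℂ) := by
  have hchar (v : EuclideanSpace ℝ ι) :
      Real.fourierChar (-inner ℝ v x) • (Real.fourierChar (inner ℝ (intVec n) v) : ℂ) =
        ∏ j, (Real.fourierChar ((n j - x j) * v j) : ℂ) := by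
    have hinner : -inner ℝ v x + inner ℝ (intVec n) v = ∑ j, (n j - x j) * v j := by
      simp only [intVec, PiLp.inner_apply, Real.inner_apply, ← Finset.sum_neg_distrib,
        ← Finset.sum_add_distrib]
      exact Finset.sum_congr rfl fun j _ => by ring
    rw [Circle.smul_def, smul_eq_mul, ← Circle.coe_mul, ← AddChar.map_add_eq_mul, hinner,
      Real.fourierChar_apply]
    simp only [Real.fourierChar_apply, ← Complex.exp_sum, Finset.mul_sum, Finset.sum_mul,
      Complex.ofReal_sum]
  have hind (v : EuclideanSpace ℝ ι) : Real.fourierChar (-inner ℝ v x) •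
      (unitCube ι).indicator (fun ξ => (Real.fourierChar (inner ℝ (intVec n) ξ) : ℂ)) v =
        (unitCube ι).indicator (fun v => ∏ j, (Real.fourierChar ((n j - x j) * v j) : ℂ)) v := by
    by_cases hv : v ∈ unitCube ι <;> simp [hv, hchar]
  simp only [Real.fourier_eq, hind]
  rw [integral_indicator measurableSet_unitCube, setIntegral_unitCube_prod fun j v =>
    (Real.fourierChar ((n j - x j) * v) : ℂ)]
  simp only [setIntegral_fourierChar_mul_eq_sinc, Complex.ofReal_prod]
  refine Finset.prod_congr rfl fun j _ => ?_
  rw [← Real.sinc_neg, ← mul_neg, neg_sub]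

theorem fourier_cubeFourier_ae_eq (n : ι → ℤ) :
    (𝓕 (cubeFourier n) : L²(EuclideanSpace ℝ ι)) =ᵐ[volume]
      fun x => ((∏ j, Real.sinc (Real.pi * (x j - n j)) : ℝ) : ℂ) := by
  have hint : Integrable ((unitCube ι).indicator fun ξ =>
      (Real.fourierChar (inner ℝ (intVec n) ξ) : ℂ)) volume := by
    refine (integrable_indicator_iff measurableSet_unitCube).2 (Measure.integrableOn_of_bounded
      (M := 1) (by simp [volume_unitCube]) ?_
      (Eventually.of_forall fun ξ => (Circle.norm_coe _).le))
    exact (continuous_subtype_val.comp (Real.continuous_fourierChar.comp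
      (by fun_prop))).aestronglyMeasurable
  exact (Lp_fourier_ae_eq_of_ae_eq (cubeFourier_ae_eq n) hint).trans
    (Eventually.of_forall (fourier_indicator_unitCube n))

end Sinc
section Gaussian

variable {V : Type*} [NormedAddCommGroup V]

/-- The Fourier multiplier of the heat semigroup at time `s`, for the normalisation
`𝓕 f x = ∫ e^{-2πi ξ·x} f ξ dξ`. -/
def heatMultiplier (s : ℝ) (ξ : V) : ℝ := Real.exp (-(4 * Real.pi ^ 2 * s) * ‖ξ‖ ^ 2)

lemma heatMultiplier_pos (s : ℝ) (ξ : V) : 0 < heatMultiplier s ξ := Real.exp_pos _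

lemma norm_heatMultiplier (s : ℝ) (ξ : V) : ‖(heatMultiplier s ξ : ℂ)‖ = heatMultiplier s ξ := by
  rw [Complex.norm_real, Real.norm_of_nonneg (heatMultiplier_pos s ξ).le]

lemma heatMultiplier_le_one {s : ℝ} (hs : 0 ≤ s) (ξ : V) : heatMultiplier s ξ ≤ 1 :=
  Real.exp_le_one_iff.2 (by rw [neg_mul, neg_nonpos]; positivity)

variable [InnerProductSpace ℝ V]

/-- The product of the heat multiplier with the character of frequency `x`; its Fourier transform
is the heat kernel centred at `x`. -/
def heatWave (s : ℝ) (x ξ : V) : ℂ := heatMultiplier s ξ * Real.fourierChar (inner ℝ x ξ)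

lemma norm_heatWave (s : ℝ) (x ξ : V) : ‖heatWave s x ξ‖ = heatMultiplier s ξ := by
  rw [heatWave, norm_mul, Circle.norm_coe, mul_one, norm_heatMultiplier]

lemma continuous_heatWave (s : ℝ) (x : V) : Continuous (heatWave s x) := by
  unfold heatWave heatMultiplier
  simp only [Real.fourierChar_apply]
  fun_prop

/-- The Euclidean heat kernel at time `t`, of total mass one in each variable. -/
def heatKernel (t : ℝ) (x y : V) : ℝ :=
  (4 * Real.pi * t) ^ (-(Module.finrank ℝ V : ℝ) / 2) * Real.exp (-‖x - y‖ ^ 2 / (4 * t))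

lemma heatKernel_nonneg {t : ℝ} (ht : 0 < t) (x y : V) : 0 ≤ heatKernel t x y := by
  unfold heatKernel; positivity

lemma heatKernel_comm (t : ℝ) (x y : V) : heatKernel t x y = heatKernel t y x := by
  simp only [heatKernel, norm_sub_rev]

lemma continuous_heatKernel (t : ℝ) (x : V) : Continuous (heatKernel t x) := by
  unfold heatKernel; fun_prop

lemma heatKernel_eq_exp_mul_sq (t : ℝ) (x y : V) : heatKernel t x y =
    (4 * Real.pi * t) ^ (-(Module.finrank ℝ V : ℝ) / 2) *
      Real.exp (-(1 / (4 * t)) * ‖x - y‖ ^ 2) := by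
  rw [heatKernel]
  ring_nf

lemma heatKernel_le_rpow_mul_heatKernel_one {t : ℝ} (ht : 0 < t) (ht1 : t ≤ 1) (x y : V) :
    heatKernel t x y ≤ t ^ (-(Module.finrank ℝ V : ℝ) / 2) * heatKernel 1 x y := by
  have hexp : Real.exp (-‖x - y‖ ^ 2 / (4 * t)) ≤ Real.exp (-‖x - y‖ ^ 2 / 4) := by
    simp only [neg_div]
    exact Real.exp_le_exp.2 (neg_le_neg (by gcongr; linarith))
  simp only [heatKernel, mul_one]
  rw [Real.mul_rpow (by positivity) ht.le, ← mul_assoc,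
    mul_comm (t ^ (-(Module.finrank ℝ V : ℝ) / 2))]
  gcongr

variable [FiniteDimensional ℝ V] [MeasurableSpace V] [BorelSpace V]

lemma integrable_exp_neg_mul_sq_norm {b : ℝ} (hb : 0 < b) :
    Integrable (fun ξ : V => Real.exp (-b * ‖ξ‖ ^ 2)) volume := by
  refine (GaussianFourier.integrable_cexp_neg_mul_sq_norm_add (b := (b : ℂ)) (by simpa using hb)
    0 (0 : V)).norm.congr (Eventually.of_forall fun ξ => ?_)
  simp [Complex.norm_exp, ← Complex.ofReal_pow]

lemma lintegral_exp_neg_mul_sq_norm_sub {b : ℝ} (hb : 0 < b) (y : V) :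
    ∫⁻ ξ : V, ENNReal.ofReal (Real.exp (-b * ‖ξ - y‖ ^ 2)) =
      ENNReal.ofReal ((Real.pi / b) ^ (Module.finrank ℝ V / 2 : ℝ)) := by
  rw [lintegral_sub_right_eq_self (fun ξ : V => ENNReal.ofReal (Real.exp (-b * ‖ξ‖ ^ 2))) y,
    ← GaussianFourier.integral_rexp_neg_mul_sq_norm hb,
    ofReal_integral_eq_lintegral_ofReal (integrable_exp_neg_mul_sq_norm hb)
      (Eventually.of_forall fun _ => (Real.exp_pos _).le)]

lemma integrable_heatWave {s : ℝ} (hs : 0 < s) (x : V) : Integrable (heatWave s x) volume := by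
  refine (integrable_norm_iff (continuous_heatWave s x).aestronglyMeasurable).1 ?_
  simp only [norm_heatWave]
  exact integrable_exp_neg_mul_sq_norm (by positivity)

lemma memLp_heatWave {s : ℝ} (hs : 0 < s) (x : V) : MemLp (heatWave s x) 2 volume := by
  refine (memLp_two_iff_integrable_sq_norm (continuous_heatWave s x).aestronglyMeasurable).2 ?_
  refine (integrable_exp_neg_mul_sq_norm (b := 8 * Real.pi ^ 2 * s) (by positivity)).congr
    (Eventually.of_forall fun ξ => ?_)
  simp only [norm_heatWave, heatMultiplier, ← Real.exp_nat_mul]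
  congr 1
  push_cast
  ring

lemma lintegral_heatKernel {t : ℝ} (ht : 0 < t) (x : V) :
    ∫⁻ y, ENNReal.ofReal (heatKernel t x y) = 1 := by
  have hmass : Real.pi / (1 / (4 * t)) = 4 * Real.pi * t := by field_simp
  simp only [heatKernel_comm t x, heatKernel_eq_exp_mul_sq, ENNReal.ofReal_mul
    (Real.rpow_nonneg (by positivity : 0 ≤ 4 * Real.pi * t) _)]
  rw [lintegral_const_mul' _ _ ENNReal.ofReal_ne_top,
    lintegral_exp_neg_mul_sq_norm_sub (by positivity), ← ENNReal.ofReal_mul (by positivity), hmass,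
    ← Real.rpow_add (by positivity), neg_div, neg_add_cancel, Real.rpow_zero, ENNReal.ofReal_one]

theorem fourier_heatWave {s : ℝ} (hs : 0 < s) (x y : V) :
    𝓕 (heatWave s x) y = (heatKernel s x y : ℂ) := by
  have hwave : heatWave s x = fun v => Complex.exp (-((4 * Real.pi ^ 2 * s : ℝ) : ℂ) * ‖v‖ ^ 2 +
      2 * Real.pi * Complex.I * (inner ℝ x v : ℝ)) := by
    ext ξ
    rw [Complex.exp_add, heatWave, heatMultiplier, Real.fourierChar_apply]
    push_cast
    ring_nf
  have hπ : (Real.pi : ℂ) ≠ 0 := by exact_mod_cast Real.pi_ne_zero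
  have hs' : (s : ℂ) ≠ 0 := by exact_mod_cast hs.ne'
  have hbase : (Real.pi : ℂ) / ((4 * Real.pi ^ 2 * s : ℝ) : ℂ) = ((4 * Real.pi * s)⁻¹ : ℝ) := by
    push_cast
    field_simp
  have hexponent : ((Module.finrank ℝ V : ℂ) / 2) = ((Module.finrank ℝ V / 2 : ℝ) : ℂ) := by simp
  rw [heatKernel, hwave,
    fourier_gaussian_innerProductSpace' (by rw [Complex.ofReal_re]; positivity) x y, hbase,
    hexponent, ← Complex.ofReal_cpow (by positivity), Real.inv_rpow (by positivity),
    ← Real.rpow_neg (by positivity), neg_div, Complex.ofReal_mul _ (Real.exp _), Complex.ofReal_exp]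
  congr 2
  push_cast
  field_simp

lemma memLp_heatKernel {t : ℝ} (ht : 0 < t) (x : V) : MemLp (heatKernel t x) 2 volume := by
  have hwave := Lp_fourier_ae_eq_of_ae_eq (MemLp.coeFn_toLp (memLp_heatWave ht x))
    (integrable_heatWave ht x)
  simpa only [fourier_heatWave ht, RCLike.re_eq_complex_re, Complex.ofReal_re]
    using ((memLp_congr_ae hwave).1 (Lp.memLp _)).re

end Gaussian

section HeatSpectrum

variable {V : Type*} [NormedAddCommGroup V] [InnerProductSpace ℝ V] [FiniteDimensional ℝ V]
  [MeasurableSpace V] [BorelSpace V]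

lemma memLp_heatMultiplier_mul {s : ℝ} (hs : 0 < s) (g : L²(V)) :
    MemLp (fun ξ => (heatMultiplier s ξ : ℂ) * g ξ) 2 volume := by
  have hmeas : Measurable fun ξ : V => (heatMultiplier s ξ : ℂ) := by
    unfold heatMultiplier; fun_prop
  refine (Lp.memLp g).of_le (hmeas.aestronglyMeasurable.mul (Lp.aestronglyMeasurable g))
    (Eventually.of_forall fun ξ => ?_)
  rw [norm_mul, norm_heatMultiplier]
  exact mul_le_of_le_one_left (norm_nonneg _) (heatMultiplier_le_one hs.le ξ)

/-- The inverse Fourier transform at time `s` of the heat solution with initial datum `U`. -/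
def heatSpectrum {s : ℝ} (hs : 0 < s) (U : L²(V)) : L²(V) :=
  (memLp_heatMultiplier_mul hs (𝓕⁻ U : L²(V))).toLp

variable {s : ℝ} (hs : 0 < s) (U : L²(V))

lemma heatSpectrum_ae_eq : heatSpectrum hs U =ᵐ[volume]
    fun ξ => (heatMultiplier s ξ : ℂ) * (𝓕⁻ U : L²(V)) ξ :=
  MemLp.coeFn_toLp _

lemma norm_heatSpectrum_le : ‖heatSpectrum hs U‖ ≤ ‖(𝓕⁻ U : L²(V))‖ := by
  refine Lp.norm_le_norm_of_ae_le ((heatSpectrum_ae_eq hs U).mono fun ξ hξ => ?_)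
  rw [hξ, norm_mul, norm_heatMultiplier]
  exact mul_le_of_le_one_left (norm_nonneg _) (heatMultiplier_le_one hs.le ξ)

lemma norm_Lp_fourierInv : ‖(𝓕⁻ U : L²(V))‖ = ‖U‖ := by
  rw [← Lp.norm_fourier_eq, FourierTransform.fourier_fourierInv_eq]

lemma integrable_heatSpectrum : Integrable (heatSpectrum hs U) volume := by
  refine (integrable_congr (heatSpectrum_ae_eq hs U)).2 ?_
  have hmult : MemLp (fun ξ : V => (heatMultiplier s ξ : ℂ)) 2 volume :=
    (memLp_congr_ae (Eventually.of_forall fun ξ => by simp [heatWave])).1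
      (memLp_heatWave hs (0 : V))
  exact hmult.integrable_mul (Lp.memLp _)

/- Plancherel turns the pairing of `U` with the heat kernel at `x` into the pairing of `𝓕⁻ U` with
`heatWave s x`. -/
theorem fourier_heatSpectrum (x : V) : 𝓕 (heatSpectrum hs U : V → ℂ) x =
    ∫ y, (heatKernel s x y : ℂ) * U y := by
  set A : L²(V) := (memLp_heatWave hs x).toLp
  have hA : A =ᵐ[volume] heatWave s x := MemLp.coeFn_toLp _
  have hFA := Lp_fourier_ae_eq_of_ae_eq hA (integrable_heatWave hs x)
  have hplancherel : inner ℂ A (𝓕⁻ U : L²(V)) = inner ℂ (𝓕 A : L²(V)) U := by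
    rw [← Lp.inner_fourier_eq, FourierTransform.fourier_fourierInv_eq]
  calc 𝓕 (heatSpectrum hs U : V → ℂ) x = inner ℂ A (𝓕⁻ U : L²(V)) := by
        rw [Real.fourier_eq, L2.inner_def]
        refine integral_congr_ae ?_
        filter_upwards [hA, heatSpectrum_ae_eq hs U] with ξ hAξ hξ
        rw [hAξ, hξ, RCLike.inner_apply, heatWave, map_mul, Complex.conj_ofReal,
          ← Circle.coe_inv_eq_conj, ← AddChar.map_neg_eq_inv, real_inner_comm, Circle.smul_def,
          smul_eq_mul]
        ring
    _ = inner ℂ (𝓕 A : L²(V)) U := hplancherel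
    _ = _ := by
        rw [L2.inner_def]
        refine integral_congr_ae (hFA.mono fun y hy => ?_)
        simp only [hy, fourier_heatWave hs, RCLike.inner_apply, Complex.conj_ofReal, mul_comm]

end HeatSpectrum

section LatticeGaussianSum

/- Averaging over the cube around `n` compares the Gaussian at `lam n` with a wider Gaussian on that
cube; the cubes tile the space, so the sum is bounded by one Gaussian integral. -/
theorem tsum_exp_neg_mul_sq_norm_sub_le {b : ℝ} (hb : 0 < b) (y : EuclideanSpace ℝ ι)
    {lam : (ι → ℤ) → EuclideanSpace ℝ ι} (hlam : ∀ n, ‖lam n - intVec n‖ ≤ 1) :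
    ∑' n, ENNReal.ofReal (Real.exp (-b * ‖lam n - y‖ ^ 2)) ≤
      ENNReal.ofReal (Real.exp (b * (1 + √(Fintype.card ι)) ^ 2) *
        (Real.pi / (b / 2)) ^ (Fintype.card ι / 2 : ℝ)) := by
  set M := 1 + √(Fintype.card ι)
  have hpointwise (n : ι → ℤ) {ξ : EuclideanSpace ℝ ι} (hξ : ξ ∈ unitCube ι) :
      Real.exp (-b * ‖lam n - y‖ ^ 2) ≤
        Real.exp (b * M ^ 2) * Real.exp (-(b / 2) * ‖ξ + intVec n - y‖ ^ 2) := by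
    have hdist : ‖ξ + intVec n - y‖ ≤ M + ‖lam n - y‖ := by
      have hsplit : ξ + intVec n - y = (ξ - (lam n - intVec n)) + (lam n - y) := by abel
      rw [hsplit]
      refine (norm_add_le _ _).trans (add_le_add_left ((norm_sub_le _ _).trans ?_) _)
      linarith [norm_le_sqrt_card_of_mem_unitCube hξ, hlam n]
    have hsq : ‖ξ + intVec n - y‖ ^ 2 ≤ 2 * (M ^ 2 + ‖lam n - y‖ ^ 2) :=
      (pow_le_pow_left₀ (norm_nonneg _) hdist 2).trans add_sq_le
    rw [← Real.exp_add]
    refine Real.exp_le_exp.2 ?_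
    nlinarith
  calc ∑' n, ENNReal.ofReal (Real.exp (-b * ‖lam n - y‖ ^ 2))
      = ∑' n, ∫⁻ _ξ in unitCube ι, ENNReal.ofReal (Real.exp (-b * ‖lam n - y‖ ^ 2)) := by
        simp [volume_unitCube]
    _ ≤ ∑' n, ∫⁻ ξ in unitCube ι, ENNReal.ofReal (Real.exp (b * M ^ 2)) *
          ENNReal.ofReal (Real.exp (-(b / 2) * ‖ξ + intVec n - y‖ ^ 2)) := by
        refine ENNReal.tsum_le_tsum fun n =>
          setLIntegral_mono' measurableSet_unitCube fun ξ hξ => ?_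
        rw [← ENNReal.ofReal_mul (Real.exp_pos _).le]
        exact ENNReal.ofReal_le_ofReal (hpointwise n hξ)
    _ = ENNReal.ofReal (Real.exp (b * M ^ 2)) *
          ∫⁻ ξ, ENNReal.ofReal (Real.exp (-(b / 2) * ‖ξ - y‖ ^ 2)) := by
        rw [lintegral_eq_tsum_unitCube, ← ENNReal.tsum_mul_left]
        exact tsum_congr fun n => lintegral_const_mul' _ _ ENNReal.ofReal_ne_top
    _ = _ := by
        rw [lintegral_exp_neg_mul_sq_norm_sub (half_pos hb), finrank_euclideanSpace,
          ENNReal.ofReal_mul (Real.exp_pos _).le]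

variable (ι) in
theorem exists_tsum_heatKernel_le_of_one_le :
    ∃ C : ℝ, 0 ≤ C ∧ ∀ {t : ℝ}, 1 ≤ t → ∀ (y : EuclideanSpace ℝ ι)
      {lam : (ι → ℤ) → EuclideanSpace ℝ ι}, (∀ n, ‖lam n - intVec n‖ ≤ 1) →
      ∑' n, ENNReal.ofReal (heatKernel t (lam n) y) ≤ ENNReal.ofReal C := by
  set D := (Fintype.card ι : ℝ)
  refine ⟨Real.exp ((1 + √D) ^ 2) * 2 ^ (D / 2), by positivity, fun {t} ht y lam hlam => ?_⟩
  have : 0 < t := one_pos.trans_le ht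
  have hexp : Real.exp (1 / (4 * t) * (1 + √D) ^ 2) ≤ Real.exp ((1 + √D) ^ 2) :=
    Real.exp_le_exp.2 (mul_le_of_le_one_left (by positivity)
      ((div_le_one (by positivity)).2 (by linarith)))
  have hpow : (4 * Real.pi * t) ^ (-D / 2) * (Real.pi / (1 / (4 * t) / 2)) ^ (D / 2) =
      2 ^ (D / 2) := by
    have hmass : Real.pi / (1 / (4 * t) / 2) = 4 * Real.pi * t * 2 := by field_simp
    rw [hmass, Real.mul_rpow (by positivity) zero_le_two, ← mul_assoc,
      ← Real.rpow_add (by positivity), neg_div, neg_add_cancel, Real.rpow_zero, one_mul]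
  simp only [heatKernel_eq_exp_mul_sq, finrank_euclideanSpace,
    ENNReal.ofReal_mul (Real.rpow_nonneg (by positivity : 0 ≤ 4 * Real.pi * t) _)]
  rw [ENNReal.tsum_mul_left]
  calc _ ≤ ENNReal.ofReal ((4 * Real.pi * t) ^ (-D / 2)) *
        ENNReal.ofReal (Real.exp (1 / (4 * t) * (1 + √D) ^ 2) *
          (Real.pi / (1 / (4 * t) / 2)) ^ (D / 2)) := by
        gcongr
        exact tsum_exp_neg_mul_sq_norm_sub_le (by positivity) y hlam
    _ = ENNReal.ofReal (Real.exp (1 / (4 * t) * (1 + √D) ^ 2) * 2 ^ (D / 2)) := by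
        rw [← ENNReal.ofReal_mul (by positivity), mul_left_comm, hpow]
    _ ≤ _ := ENNReal.ofReal_le_ofReal (by gcongr)

variable (ι) in
theorem exists_tsum_heatKernel_le :
    ∃ C : ℝ, 0 ≤ C ∧ ∀ {t : ℝ}, 0 < t → ∀ (y : EuclideanSpace ℝ ι)
      {lam : (ι → ℤ) → EuclideanSpace ℝ ι}, (∀ n, ‖lam n - intVec n‖ ≤ 1) →
      ∑' n, ENNReal.ofReal (heatKernel t (lam n) y) ≤
        ENNReal.ofReal (C * (1 + t ^ (-(Fintype.card ι : ℝ) / 2))) := by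
  obtain ⟨C, hC, hsum⟩ := exists_tsum_heatKernel_le_of_one_le ι
  refine ⟨C, hC, fun {t} ht y lam hlam => ?_⟩
  have hpow : 0 ≤ t ^ (-(Fintype.card ι : ℝ) / 2) := Real.rpow_nonneg ht.le _
  rcases le_total 1 t with ht1 | ht1
  · exact (hsum ht1 y hlam).trans
      (ENNReal.ofReal_le_ofReal (le_mul_of_one_le_right hC (by linarith)))
  · calc ∑' n, ENNReal.ofReal (heatKernel t (lam n) y)
        ≤ ∑' n, ENNReal.ofReal (t ^ (-(Fintype.card ι : ℝ) / 2)) *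
            ENNReal.ofReal (heatKernel 1 (lam n) y) := by
          gcongr with n
          rw [← ENNReal.ofReal_mul hpow]
          exact ENNReal.ofReal_le_ofReal (by
            simpa only [finrank_euclideanSpace]
              using heatKernel_le_rpow_mul_heatKernel_one ht ht1 (lam n) y)
      _ ≤ ENNReal.ofReal (t ^ (-(Fintype.card ι : ℝ) / 2)) * ENNReal.ofReal C := by
          rw [ENNReal.tsum_mul_left]
          gcongr
          exact hsum le_rfl y hlam
      _ ≤ _ := by
          rw [← ENNReal.ofReal_mul hpow]
          exact ENNReal.ofReal_le_ofReal (by nlinarith)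

lemma summable_exp_neg_mul_sq_norm_intVec {b : ℝ} (hb : 0 < b) :
    Summable fun k : ι → ℤ => Real.exp (-b * ‖intVec k‖ ^ 2) := by
  have hle := tsum_exp_neg_mul_sq_norm_sub_le (lam := intVec (ι := ι)) hb 0 (by simp)
  simpa [ENNReal.toReal_ofReal, (Real.exp_pos _).le]
    using ENNReal.summable_toReal (hle.trans_lt ENNReal.ofReal_lt_top).ne

end LatticeGaussianSum

section Aliasing

/-- The restriction of `V` to the cube around `k`, translated back to the unit cube. -/
def foldPiece (V : L²(EuclideanSpace ℝ ι)) (k : ι → ℤ) : L²(EuclideanSpace ℝ ι) :=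
  ((Lp.memLp (Lp.compMeasurePreserving (· + intVec k) (measurePreserving_add_right volume _)
    V)).indicator measurableSet_unitCube).toLp

variable (V : L²(EuclideanSpace ℝ ι)) (k : ι → ℤ)

lemma foldPiece_ae_eq :
    foldPiece V k =ᵐ[volume] (unitCube ι).indicator fun ξ => V (ξ + intVec k) := by
  refine (MemLp.coeFn_toLp _).trans ?_
  filter_upwards [Lp.coeFn_compMeasurePreserving V (measurePreserving_add_right volume (intVec k))]
    with ξ hξ
  simp only [Set.indicator, hξ, Function.comp_apply]

lemma foldPiece_eq_zero : ∀ᵐ ξ, ξ ∉ unitCube ι → foldPiece V k ξ = 0 := by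
  filter_upwards [foldPiece_ae_eq V k] with ξ hξ hmem
  rw [hξ, Set.indicator_of_notMem hmem]

lemma norm_foldPiece_le {W : L²(EuclideanSpace ℝ ι)} {c : ℝ} (hc : 0 ≤ c)
    (h : ∀ᵐ ξ, ξ - intVec k ∈ unitCube ι → ‖V ξ‖ ≤ c * ‖W ξ‖) : ‖foldPiece V k‖ ≤ c * ‖W‖ := by
  have hτ := measurePreserving_add_right (volume : Measure (EuclideanSpace ℝ ι)) (intVec k)
  rw [← Lp.norm_compMeasurePreserving W hτ]
  refine Lp.norm_le_mul_norm_of_ae_le_mul ?_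
  filter_upwards [foldPiece_ae_eq V k, Lp.coeFn_compMeasurePreserving W hτ,
    hτ.quasiMeasurePreserving.ae h] with ξ hfold hW hle
  rw [hfold, hW, Function.comp_apply]
  by_cases hξ : ξ ∈ unitCube ι
  · rw [Set.indicator_of_mem hξ]
    exact hle (by rwa [add_sub_cancel_right])
  · rw [Set.indicator_of_notMem hξ, norm_zero]
    positivity

variable {V}

lemma inner_cubeFourier_foldPiece (n : ι → ℤ) :
    inner ℂ (cubeFourier n) (foldPiece V k) = ∫ ξ in unitCube ι,
      Real.fourierChar (-inner ℝ (ξ + intVec k) (intVec n)) • V (ξ + intVec k) := by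
  rw [L2.inner_def, ← integral_indicator measurableSet_unitCube]
  refine integral_congr_ae ?_
  filter_upwards [cubeFourier_ae_eq n, foldPiece_ae_eq V k] with ξ hcube hfold
  rw [hcube, hfold, RCLike.inner_apply]
  by_cases hξ : ξ ∈ unitCube ι
  · simp only [Set.indicator_of_mem hξ]
    rw [real_inner_comm (intVec n), AddChar.map_neg_eq_inv, fourierChar_inner_add_intVec,
      Circle.smul_def, Circle.coe_inv_eq_conj, smul_eq_mul, mul_comm]
  · simp only [Set.indicator_of_notMem hξ, zero_mul]

/- Poisson summation: the periodisation of `V` has the samples of `𝓕 V` as Fourier coefficients. -/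
theorem hasSum_fourier_smul_cubeFourier (hV : Integrable V volume)
    (hfold : Summable (foldPiece V)) :
    HasSum (fun n => 𝓕 (V : EuclideanSpace ℝ ι → ℂ) (intVec n) • cubeFourier n)
      (∑' k, foldPiece V k) := by
  have hcoeff (n : ι → ℤ) : inner ℂ (cubeFourier n) (∑' k, foldPiece V k) =
      𝓕 (V : EuclideanSpace ℝ ι → ℂ) (intVec n) := by
    have hinner := hfold.hasSum.mapL (innerSL ℂ (cubeFourier n))
    simp only [innerSL_apply_apply, inner_cubeFourier_foldPiece] at hinner
    exact hinner.unique (hasSum_integral_unitCube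
      ((Real.fourierIntegral_convergent_iff (intVec n)).2 hV))
  have hmem : ∑' k, foldPiece V k ∈
      closure {f : L²(EuclideanSpace ℝ ι) | ∀ᵐ ξ, ξ ∉ unitCube ι → f ξ = 0} := by
    refine mem_closure_of_tendsto hfold.hasSum (Eventually.of_forall fun s => ?_)
    filter_upwards [Lp.coeFn_fun_finsetSum s (foldPiece V),
      ae_all_iff.2 fun k => foldPiece_eq_zero V k] with ξ hsum hzero hξ
    rw [hsum]
    exact Finset.sum_eq_zero fun k _ => hzero k hξ
  simpa only [hcoeff] using hasSum_inner_cubeFourier hmem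

lemma norm_sub_foldPiece_zero_le {W : L²(EuclideanSpace ℝ ι)} {c : ℝ} (hc : 0 ≤ c)
    (h : ∀ᵐ ξ, ξ ∉ unitCube ι → ‖V ξ‖ ≤ c * ‖W ξ‖) : ‖V - foldPiece V 0‖ ≤ c * ‖W‖ := by
  refine Lp.norm_le_mul_norm_of_ae_le_mul ?_
  filter_upwards [Lp.coeFn_sub V (foldPiece V 0), foldPiece_ae_eq V 0, h] with ξ hsub hfold hle
  rw [hsub, Pi.sub_apply, hfold, intVec_zero]
  by_cases hξ : ξ ∈ unitCube ι
  · simp only [Set.indicator_of_mem hξ, add_zero, sub_self, norm_zero]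
    positivity
  · simpa only [Set.indicator_of_notMem hξ, sub_zero] using hle hξ

lemma heatMultiplier_le_of_sub_mem_unitCube {s : ℝ} (hs : 0 ≤ s) {ξ : EuclideanSpace ℝ ι}
    {k : ι → ℤ} (hξ : ξ - intVec k ∈ unitCube ι) :
    heatMultiplier s ξ ≤ Real.exp (-(Real.pi ^ 2 * s) * ‖intVec k‖ ^ 2) := by
  have hnorm := norm_intVec_le_two_mul_norm_add hξ k
  rw [sub_add_cancel] at hnorm
  have hsq := pow_le_pow_left₀ (norm_nonneg _) hnorm 2
  refine Real.exp_le_exp.2 ?_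
  nlinarith [mul_nonneg (sq_nonneg Real.pi) hs]

lemma heatMultiplier_le_of_notMem_unitCube {s : ℝ} (hs : 0 ≤ s) {ξ : EuclideanSpace ℝ ι}
    (hξ : ξ ∉ unitCube ι) : heatMultiplier s ξ ≤ Real.exp (-(Real.pi ^ 2 * s)) := by
  have hsq := pow_le_pow_left₀ (by norm_num) (one_half_le_norm_of_notMem_unitCube hξ) 2
  refine Real.exp_le_exp.2 ?_
  nlinarith [mul_nonneg (sq_nonneg Real.pi) hs]

section HeatSpectrum

variable {s : ℝ} (hs : 0 < s) (U : L²(EuclideanSpace ℝ ι))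

lemma norm_foldPiece_heatSpectrum_le : ‖foldPiece (heatSpectrum hs U) k‖ ≤
    Real.exp (-(Real.pi ^ 2 * s) * ‖intVec k‖ ^ 2) * ‖U‖ := by
  rw [← norm_Lp_fourierInv U]
  refine norm_foldPiece_le _ k (Real.exp_pos _).le
    ((heatSpectrum_ae_eq hs U).mono fun ξ hξ hmem => ?_)
  rw [hξ, norm_mul, norm_heatMultiplier]
  gcongr
  exact heatMultiplier_le_of_sub_mem_unitCube hs.le hmem

lemma norm_heatSpectrum_sub_foldPiece_zero_le :
    ‖heatSpectrum hs U - foldPiece (heatSpectrum hs U) 0‖ ≤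
      Real.exp (-(Real.pi ^ 2 * s)) * ‖U‖ := by
  rw [← norm_Lp_fourierInv U]
  refine norm_sub_foldPiece_zero_le (Real.exp_pos _).le
    ((heatSpectrum_ae_eq hs U).mono fun ξ hξ hmem => ?_)
  rw [hξ, norm_mul, norm_heatMultiplier]
  gcongr
  exact heatMultiplier_le_of_notMem_unitCube hs.le hmem

lemma summable_foldPiece_heatSpectrum : Summable (foldPiece (heatSpectrum hs U)) :=
  Summable.of_norm_bounded ((summable_exp_neg_mul_sq_norm_intVec (by positivity)).mul_right ‖U‖)
    fun k => norm_foldPiece_heatSpectrum_le k hs U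

lemma norm_heatSpectrum_sub_tsum_foldPiece_le (hs1 : 1 ≤ s) :
    ‖heatSpectrum hs U - ∑' k, foldPiece (heatSpectrum hs U) k‖ ≤
      Real.exp (-2 * s) * (1 + ∑' k : ι → ℤ, Real.exp (-1 * ‖intVec k‖ ^ 2)) * ‖U‖ := by
  have hπ : 9 ≤ Real.pi ^ 2 := by nlinarith [Real.pi_gt_three]
  have hnear : Real.exp (-(Real.pi ^ 2 * s)) ≤ Real.exp (-2 * s) :=
    Real.exp_le_exp.2 (by nlinarith)
  have hfar {k : ι → ℤ} (hk : k ≠ 0) : Real.exp (-(Real.pi ^ 2 * s) * ‖intVec k‖ ^ 2) ≤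
      Real.exp (-2 * s) * Real.exp (-1 * ‖intVec k‖ ^ 2) := by
    have hk2 : 1 ≤ ‖intVec k‖ ^ 2 := one_le_pow₀ (one_le_norm_intVec hk)
    rw [← Real.exp_add]
    refine Real.exp_le_exp.2 ?_
    nlinarith [mul_le_mul_of_nonneg_right hπ (by positivity : 0 ≤ s * ‖intVec k‖ ^ 2)]
  have htail : ‖∑' k, if k = 0 then 0 else foldPiece (heatSpectrum hs U) k‖ ≤
      Real.exp (-2 * s) * (∑' k : ι → ℤ, Real.exp (-1 * ‖intVec k‖ ^ 2)) * ‖U‖ := by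
    refine tsum_of_norm_bounded (((summable_exp_neg_mul_sq_norm_intVec
      one_pos).hasSum.mul_left _).mul_right _) fun k => ?_
    split_ifs with hk
    · rw [norm_zero]
      positivity
    · exact (norm_foldPiece_heatSpectrum_le k hs U).trans (by gcongr; exact hfar hk)
  rw [(summable_foldPiece_heatSpectrum hs U).tsum_eq_add_tsum_ite 0, ← sub_sub]
  calc _ ≤ Real.exp (-2 * s) * ‖U‖ +
        Real.exp (-2 * s) * (∑' k : ι → ℤ, Real.exp (-1 * ‖intVec k‖ ^ 2)) * ‖U‖ :=
        (norm_sub_le _ _).trans (add_le_add ((norm_heatSpectrum_sub_foldPiece_zero_le hs U).trans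
          (by gcongr)) htail)
    _ = _ := by ring

end HeatSpectrum

variable (ι) in
theorem exists_hasSum_cubeFourier_norm_heatSpectrum_sub_le :
    ∃ C : ℝ, 0 ≤ C ∧ ∀ {s : ℝ} (hs : 0 < s) (U : L²(EuclideanSpace ℝ ι)), 1 ≤ s →
      ∃ P : L²(EuclideanSpace ℝ ι),
        HasSum (fun n => 𝓕 (heatSpectrum hs U : EuclideanSpace ℝ ι → ℂ) (intVec n) •
          cubeFourier n) P ∧
        ‖heatSpectrum hs U - P‖ ≤ C * Real.exp (-2 * s) * ‖U‖ :=
  ⟨1 + ∑' k : ι → ℤ, Real.exp (-1 * ‖intVec k‖ ^ 2), by positivity, fun hs U hs1 =>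
    ⟨_, hasSum_fourier_smul_cubeFourier (integrable_heatSpectrum hs U)
      (summable_foldPiece_heatSpectrum hs U),
      (norm_heatSpectrum_sub_tsum_foldPiece_le hs U hs1).trans_eq (by ring)⟩⟩

end Aliasing

section SchurTest

variable {α : Type*} [MeasurableSpace α] {μ : Measure α} {f : α → ℝ≥0∞}

lemma sq_lintegral_mul_le {K : α → ℝ≥0∞} (hK : AEMeasurable K μ) (hf : AEMeasurable f μ) :
    (∫⁻ y, K y * f y ∂μ) ^ 2 ≤ (∫⁻ y, K y ∂μ) * ∫⁻ y, K y * f y ^ 2 ∂μ := by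
  have hsqrt (a : ℝ≥0∞) : (a ^ (1 / 2 : ℝ)) ^ (2 : ℝ) = a := by
    rw [← ENNReal.rpow_mul, one_div_mul_cancel two_ne_zero, ENNReal.rpow_one]
  have hmul (a : ℝ≥0∞) : a ^ (1 / 2 : ℝ) * a ^ (1 / 2 : ℝ) = a := by
    rw [← ENNReal.mul_rpow_of_nonneg _ _ one_half_pos.le, ← sq, ← ENNReal.rpow_two,
      ← ENNReal.rpow_mul, mul_one_div_cancel two_ne_zero, ENNReal.rpow_one]
  have hholder := ENNReal.lintegral_mul_le_Lp_mul_Lq μ Real.HolderConjugate.two_two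
    (hK.pow_const (1 / 2 : ℝ)) ((hK.pow_const (1 / 2 : ℝ)).mul hf)
  simp only [Pi.mul_apply, ← mul_assoc, hmul, hsqrt,
    ENNReal.mul_rpow_of_nonneg _ _ (zero_le_two : (0 : ℝ) ≤ 2)] at hholder
  have hsq := pow_le_pow_left₀ zero_le hholder 2
  simpa only [mul_pow, ← ENNReal.rpow_two, hsqrt] using hsq

theorem tsum_sq_lintegral_mul_le {κ : Type*} [Countable κ] {K : κ → α → ℝ≥0∞}
    (hK : ∀ n, AEMeasurable (K n) μ) (hf : AEMeasurable f μ) {A B : ℝ≥0∞}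
    (hA : ∀ n, ∫⁻ y, K n y ∂μ ≤ A) (hB : ∀ y, ∑' n, K n y ≤ B) :
    ∑' n, (∫⁻ y, K n y * f y ∂μ) ^ 2 ≤ A * B * ∫⁻ y, f y ^ 2 ∂μ := by
  calc ∑' n, (∫⁻ y, K n y * f y ∂μ) ^ 2
      ≤ ∑' n, A * ∫⁻ y, K n y * f y ^ 2 ∂μ :=
        ENNReal.tsum_le_tsum fun n => (sq_lintegral_mul_le (hK n) hf).trans (by gcongr; exact hA n)
    _ = A * ∫⁻ y, (∑' n, K n y) * f y ^ 2 ∂μ := by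
        simp only [ENNReal.tsum_mul_left, ← ENNReal.tsum_mul_right]
        exact congrArg (A * ·) (lintegral_tsum fun n => (hK n).mul (hf.pow_const 2)).symm
    _ ≤ A * ∫⁻ y, B * f y ^ 2 ∂μ := by
        gcongr with y
        exact hB y
    _ = A * B * ∫⁻ y, f y ^ 2 ∂μ := by rw [lintegral_const_mul'' _ (hf.pow_const 2), mul_assoc]

end SchurTest

section KernelPerturbation

/- The derivative is at most `2 e^{-bρ²/2}`, because `b|ρ| ≤ e^{bρ²/2}`. -/
lemma abs_exp_neg_mul_sq_sub_le {b r t ε : ℝ} (hb : 0 ≤ b) (hb1 : b ≤ 1) (hrt : |r - t| ≤ ε)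
    (hε : ε ≤ 1) :
    |Real.exp (-b * r ^ 2) - Real.exp (-b * t ^ 2)| ≤
      2 * Real.exp 1 * Real.exp (-(b / 4) * t ^ 2) * ε := by
  have hderiv (ρ : ℝ) : HasDerivAt (fun ρ => Real.exp (-b * ρ ^ 2))
      (Real.exp (-b * ρ ^ 2) * (-b * (2 * ρ))) ρ := by
    simpa using ((hasDerivAt_pow 2 ρ).const_mul (-b)).exp
  have hbound {ρ : ℝ} (hρ : ρ ∈ Set.uIcc t r) :
      ‖Real.exp (-b * ρ ^ 2) * (-b * (2 * ρ))‖ ≤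
        2 * Real.exp 1 * Real.exp (-(b / 4) * t ^ 2) := by
    have hρt : |ρ - t| ≤ 1 := (Set.abs_sub_left_of_mem_uIcc hρ).trans (hrt.trans hε)
    have ht : t ^ 2 ≤ 2 * ρ ^ 2 + 2 := by
      nlinarith [sq_nonneg (2 * ρ - t), sq_abs (ρ - t), abs_nonneg (ρ - t)]
    have hlinear : b * |ρ| ≤ Real.exp (b / 2 * ρ ^ 2) := by
      refine le_trans ?_ (Real.add_one_le_exp _)
      nlinarith [mul_nonneg hb (sq_nonneg (|ρ| - 1)), sq_abs ρ]
    calc ‖Real.exp (-b * ρ ^ 2) * (-b * (2 * ρ))‖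
        = 2 * (b * |ρ|) * Real.exp (-b * ρ ^ 2) := by
          simp only [norm_mul, norm_neg, Real.norm_eq_abs, Real.abs_exp, abs_of_nonneg hb,
            Nat.abs_ofNat]
          ring
      _ ≤ 2 * Real.exp (b / 2 * ρ ^ 2) * Real.exp (-b * ρ ^ 2) := by gcongr
      _ = 2 * Real.exp (-(b / 2) * ρ ^ 2) := by
          rw [mul_assoc, ← Real.exp_add]
          ring_nf
      _ ≤ 2 * Real.exp (1 + -(b / 4) * t ^ 2) := by
          gcongr
          nlinarith
      _ = _ := by rw [Real.exp_add, mul_assoc]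
  have hmvt := (convex_uIcc t r).norm_image_sub_le_of_norm_hasDerivWithin_le
    (fun ρ _ => (hderiv ρ).hasDerivWithinAt) (fun ρ => hbound) Set.left_mem_uIcc Set.right_mem_uIcc
  exact hmvt.trans (by gcongr; exact hrt)

theorem abs_heatKernel_sub_le {V : Type*} [NormedAddCommGroup V] [InnerProductSpace ℝ V]
    {s ε : ℝ} (hs : 1 ≤ s) (hε : ε ≤ 1) {x x' : V} (hx : ‖x - x'‖ ≤ ε) (y : V) :
    |heatKernel s x y - heatKernel s x' y| ≤
      2 * Real.exp 1 * 4 ^ (Module.finrank ℝ V / 2 : ℝ) * ε * heatKernel (4 * s) x' y := by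
  have : 0 < s := one_pos.trans_le hs
  have hdist : |‖x - y‖ - ‖x' - y‖| ≤ ε :=
    (abs_norm_sub_norm_le _ _).trans (by rwa [sub_sub_sub_cancel_right])
  have hexp := abs_exp_neg_mul_sq_sub_le (b := 1 / (4 * s)) (by positivity)
    ((div_le_one (by positivity)).2 (by linarith)) hdist hε
  have hwiden : 4 ^ (Module.finrank ℝ V / 2 : ℝ) * heatKernel (4 * s) x' y =
      (4 * Real.pi * s) ^ (-(Module.finrank ℝ V : ℝ) / 2) *
        Real.exp (-(1 / (4 * s) / 4) * ‖x' - y‖ ^ 2) := by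
    have hbase : 4 * Real.pi * (4 * s) = 4 * (4 * Real.pi * s) := by ring
    rw [heatKernel_eq_exp_mul_sq, hbase, Real.mul_rpow zero_le_four (by positivity), neg_div,
      Real.rpow_neg zero_le_four, ← mul_assoc, mul_inv_cancel_left₀ (by positivity), div_div,
      mul_comm (4 * s) 4]
  calc |heatKernel s x y - heatKernel s x' y|
      = (4 * Real.pi * s) ^ (-(Module.finrank ℝ V : ℝ) / 2) *
          |Real.exp (-(1 / (4 * s)) * ‖x - y‖ ^ 2) -
            Real.exp (-(1 / (4 * s)) * ‖x' - y‖ ^ 2)| := by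
        simp only [heatKernel_eq_exp_mul_sq]
        rw [← mul_sub, abs_mul, abs_of_nonneg (by positivity)]
    _ ≤ (4 * Real.pi * s) ^ (-(Module.finrank ℝ V : ℝ) / 2) *
          (2 * Real.exp 1 * Real.exp (-(1 / (4 * s) / 4) * ‖x' - y‖ ^ 2) * ε) := by gcongr
    _ = 2 * Real.exp 1 * ε * (4 ^ (Module.finrank ℝ V / 2 : ℝ) * heatKernel (4 * s) x' y) := by
        rw [hwiden]
        ring
    _ = _ := by ring

end KernelPerturbation

section Sampling

variable (ι) in
theorem exists_tsum_sq_lintegral_heatKernel_mul_le :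
    ∃ C : ℝ, 0 ≤ C ∧ ∀ {t : ℝ}, 0 < t → ∀ {lam : (ι → ℤ) → EuclideanSpace ℝ ι},
      (∀ n, ‖lam n - intVec n‖ ≤ 1) →
      ∀ {f : EuclideanSpace ℝ ι → ℝ≥0∞}, AEMeasurable f volume →
      ∑' n, (∫⁻ y, ENNReal.ofReal (heatKernel t (lam n) y) * f y) ^ 2 ≤
        ENNReal.ofReal ((C * (1 + t ^ (-(Fintype.card ι : ℝ) / 4))) ^ 2) * ∫⁻ y, f y ^ 2 := by
  obtain ⟨C, hC, hsum⟩ := exists_tsum_heatKernel_le ι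
  refine ⟨1 + C, by positivity, fun {t} ht lam hlam f hf => ?_⟩
  have hmeas (n : ι → ℤ) : AEMeasurable (fun y => ENNReal.ofReal (heatKernel t (lam n) y)) volume :=
    (continuous_heatKernel t (lam n)).measurable.ennreal_ofReal.aemeasurable
  have hschur := tsum_sq_lintegral_mul_le hmeas hf (fun n => (lintegral_heatKernel ht (lam n)).le)
    fun y => hsum ht y hlam
  rw [one_mul] at hschur
  refine hschur.trans ?_
  gcongr
  set p := t ^ (-(Fintype.card ι : ℝ) / 4)
  have hp : 0 ≤ p := Real.rpow_nonneg ht.le _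
  have hp2 : t ^ (-(Fintype.card ι : ℝ) / 2) = p ^ 2 := by
    rw [← Real.rpow_mul_natCast ht.le]
    congr 1
    push_cast
    ring
  rw [hp2, mul_pow]
  gcongr
  · nlinarith
  · nlinarith

end Sampling

section Synthesis

lemma exists_hasSum_smul_norm_le {𝕜 E κ : Type*} [RCLike 𝕜] [NormedAddCommGroup E]
    [InnerProductSpace 𝕜 E] [CompleteSpace E] {e : κ → E} (he : Orthonormal 𝕜 e) {a : κ → 𝕜}
    {M : ℝ} (hM : 0 ≤ M) (ha : ∑' n, ‖a n‖ₑ ^ 2 ≤ ENNReal.ofReal (M ^ 2)) :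
    ∃ S : E, HasSum (fun n => a n • e n) S ∧ ‖S‖ ≤ M := by
  have hfinite (t : Finset κ) : ∑ n ∈ t, ‖a n‖ ^ 2 ≤ M ^ 2 := by
    refine (ENNReal.ofReal_le_ofReal_iff (sq_nonneg M)).1 (le_trans (le_of_eq ?_)
      ((ENNReal.sum_le_tsum t).trans ha))
    rw [ENNReal.ofReal_sum_of_nonneg fun _ _ => sq_nonneg _]
    simp only [ENNReal.ofReal_pow (norm_nonneg _), ofReal_norm]
  have hnorm (t : Finset κ) : ‖∑ n ∈ t, a n • e n‖ ^ 2 = ∑ n ∈ t, ‖a n‖ ^ 2 := by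
    simpa using he.orthogonalFamily.norm_sum a t
  have hsum : Summable fun n => a n • e n := by
    simpa using (he.orthogonalFamily.summable_iff_norm_sq_summable a).2
      (summable_of_sum_le (fun n => sq_nonneg _) hfinite)
  exact ⟨_, hsum.hasSum, le_of_tendsto hsum.hasSum.norm (Eventually.of_forall fun t =>
    (sq_le_sq₀ (norm_nonneg _) hM).1 ((hnorm t).trans_le (hfinite t)))⟩

end Synthesis

section HeatSolution

variable {d : ℕ} {u₀ : EuclideanSpace ℝ (Fin d) → ℝ}

lemma heatSol_eq_integral_heatKernel (s : ℝ) (x : EuclideanSpace ℝ (Fin d)) :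
    heatSol d u₀ s x = ∫ y, heatKernel s x y * u₀ y := by
  simp only [heatSol, heatKernel, finrank_euclideanSpace_fin, mul_assoc, integral_const_mul]

lemma ofReal_l2norm_sq (hu : MemLp u₀ 2 volume) :
    ENNReal.ofReal (l2norm d u₀ ^ 2) = ∫⁻ y, ‖u₀ y‖ₑ ^ 2 := by
  rw [l2norm, ENNReal.ofReal_pow ENNReal.toReal_nonneg, ENNReal.ofReal_toReal hu.2.ne]
  simpa using eLpNorm_nnreal_pow_eq_lintegral (f := u₀) (μ := volume) (p := 2) two_ne_zero

lemma l2norm_nonneg : 0 ≤ l2norm d u₀ := ENNReal.toReal_nonneg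

variable (d) in
theorem exists_tsum_sq_le_of_enorm_le_lintegral_heatKernel :
    ∃ C : ℝ, 0 ≤ C ∧ ∀ {t : ℝ}, 0 < t → ∀ {lam : (Fin d → ℤ) → EuclideanSpace ℝ (Fin d)},
      (∀ n, ‖lam n - intVec n‖ ≤ 1) → ∀ {u₀ : EuclideanSpace ℝ (Fin d) → ℝ},
      MemLp u₀ 2 volume → ∀ {κ : ℝ}, 0 ≤ κ → ∀ {a : (Fin d → ℤ) → ℝ},
      (∀ n, ‖a n‖ₑ ≤ ENNReal.ofReal κ *
        ∫⁻ y, ENNReal.ofReal (heatKernel t (lam n) y) * ‖u₀ y‖ₑ) →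
      ∑' n, ‖a n‖ₑ ^ 2 ≤
        ENNReal.ofReal ((κ * (C * (1 + t ^ (-(d : ℝ) / 4))) * l2norm d u₀) ^ 2) := by
  obtain ⟨C, hC, hsum⟩ := exists_tsum_sq_lintegral_heatKernel_mul_le (Fin d)
  refine ⟨C, hC, fun {t} ht lam hlam u₀ hu κ hκ a ha => ?_⟩
  calc ∑' n, ‖a n‖ₑ ^ 2
      ≤ ∑' n, (ENNReal.ofReal κ *
          ∫⁻ y, ENNReal.ofReal (heatKernel t (lam n) y) * ‖u₀ y‖ₑ) ^ 2 :=
        ENNReal.tsum_le_tsum fun n => pow_le_pow_left₀ zero_le (ha n) 2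
    _ ≤ ENNReal.ofReal κ ^ 2 * (ENNReal.ofReal ((C * (1 + t ^ (-(d : ℝ) / 4))) ^ 2) *
          ∫⁻ y, ‖u₀ y‖ₑ ^ 2) := by
        simp only [mul_pow, ENNReal.tsum_mul_left]
        gcongr
        simpa only [Fintype.card_fin, mul_pow] using hsum ht hlam hu.1.enorm
    _ = _ := by
        rw [← ofReal_l2norm_sq hu, ← ENNReal.ofReal_pow hκ, ← ENNReal.ofReal_mul (sq_nonneg _),
          ← ENNReal.ofReal_mul (sq_nonneg _), ← mul_pow, ← mul_pow, mul_assoc κ]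

variable (d) in
theorem exists_tsum_enorm_heatSol_sq_le :
    ∃ C : ℝ, 0 ≤ C ∧ ∀ {s : ℝ}, 0 < s → ∀ {lam : (Fin d → ℤ) → EuclideanSpace ℝ (Fin d)},
      (∀ n, ‖lam n - intVec n‖ ≤ 1) → ∀ {u₀ : EuclideanSpace ℝ (Fin d) → ℝ},
      MemLp u₀ 2 volume → ∑' n, ‖heatSol d u₀ s (lam n)‖ₑ ^ 2 ≤
        ENNReal.ofReal ((C * (1 + s ^ (-(d : ℝ) / 4)) * l2norm d u₀) ^ 2) := by
  obtain ⟨C, hC, hsum⟩ := exists_tsum_sq_le_of_enorm_le_lintegral_heatKernel d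
  refine ⟨C, hC, fun {s} hs lam hlam u₀ hu => ?_⟩
  refine (hsum hs hlam hu zero_le_one fun n => ?_).trans_eq (by rw [one_mul])
  rw [ENNReal.ofReal_one, one_mul, heatSol_eq_integral_heatKernel]
  refine (enorm_integral_le_lintegral_enorm _).trans_eq ?_
  simp only [enorm_mul, Real.enorm_of_nonneg (heatKernel_nonneg hs _ _)]

lemma enorm_heatSol_sub_le (hu : MemLp u₀ 2 volume) {s ε : ℝ} (hs : 1 ≤ s) (hε : ε ≤ 1)
    {x x' : EuclideanSpace ℝ (Fin d)} (hx : ‖x - x'‖ ≤ ε) :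
    ‖heatSol d u₀ s x - heatSol d u₀ s x'‖ₑ ≤
      ENNReal.ofReal (2 * Real.exp 1 * 4 ^ (d / 2 : ℝ) * ε) *
        ∫⁻ y, ENNReal.ofReal (heatKernel (4 * s) x' y) * ‖u₀ y‖ₑ := by
  have hspos : 0 < s := one_pos.trans_le hs
  have hε0 : 0 ≤ ε := (norm_nonneg _).trans hx
  have hint (z : EuclideanSpace ℝ (Fin d)) : Integrable (fun y => heatKernel s z y * u₀ y) volume :=
    (memLp_heatKernel hspos z).integrable_mul hu
  rw [heatSol_eq_integral_heatKernel, heatSol_eq_integral_heatKernel,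
    ← integral_sub (hint x) (hint x'), ← lintegral_const_mul' _ _ ENNReal.ofReal_ne_top]
  refine (enorm_integral_le_lintegral_enorm _).trans (lintegral_mono fun y => ?_)
  rw [← sub_mul, enorm_mul, ← mul_assoc, ← ENNReal.ofReal_mul (by positivity),
    Real.enorm_eq_ofReal_abs (_ - _)]
  gcongr
  simpa only [finrank_euclideanSpace_fin] using abs_heatKernel_sub_le hs hε hx y

variable (d) in
theorem exists_tsum_enorm_heatSol_sub_sq_le :
    ∃ C : ℝ, 0 ≤ C ∧ ∀ {s ε : ℝ}, 1 ≤ s → ε ≤ 1 →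
      ∀ {lam : (Fin d → ℤ) → EuclideanSpace ℝ (Fin d)}, (∀ n, ‖lam n - intVec n‖ ≤ ε) →
      ∀ {u₀ : EuclideanSpace ℝ (Fin d) → ℝ}, MemLp u₀ 2 volume →
      ∑' n, ‖heatSol d u₀ s (lam n) - heatSol d u₀ s (intVec n)‖ₑ ^ 2 ≤
        ENNReal.ofReal ((C * ε * l2norm d u₀) ^ 2) := by
  obtain ⟨C, hC, hsum⟩ := exists_tsum_sq_le_of_enorm_le_lintegral_heatKernel d
  set A := 2 * Real.exp 1 * 4 ^ (d / 2 : ℝ)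
  refine ⟨A * (C * 2), by positivity, fun {s ε} hs hε lam hlam u₀ hu => ?_⟩
  have hε0 : 0 ≤ ε := (norm_nonneg _).trans (hlam 0)
  have : 0 < s := one_pos.trans_le hs
  have hpow : (4 * s) ^ (-(d : ℝ) / 4) ≤ 1 :=
    Real.rpow_le_one_of_one_le_of_nonpos (by linarith)
      (div_nonpos_of_nonpos_of_nonneg (neg_nonpos.2 d.cast_nonneg) zero_le_four)
  refine (hsum (t := 4 * s) (lam := intVec) (κ := A * ε) (by positivity) (by simp) hu
    (by positivity) fun n => enorm_heatSol_sub_le hu hs hε (hlam n)).trans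
      (ENNReal.ofReal_le_ofReal ?_)
  have hL : 0 ≤ l2norm d u₀ := l2norm_nonneg
  calc _ ≤ (A * ε * (C * (1 + 1)) * l2norm d u₀) ^ 2 := by gcongr
    _ = _ := by ring

variable {U : L²(EuclideanSpace ℝ (Fin d))} (hU : U =ᵐ[volume] fun y => (u₀ y : ℂ))
include hU

lemma norm_eq_l2norm : ‖U‖ = l2norm d u₀ := by
  rw [Lp.norm_def, l2norm, eLpNorm_congr_ae hU]
  exact congrArg _ (eLpNorm_congr_norm_ae (Eventually.of_forall fun y => Complex.norm_real _))

variable {s : ℝ} (hs : 0 < s)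

lemma fourier_heatSpectrum_eq_heatSol (x : EuclideanSpace ℝ (Fin d)) :
    𝓕 (heatSpectrum hs U : EuclideanSpace ℝ (Fin d) → ℂ) x = (heatSol d u₀ s x : ℂ) := by
  rw [fourier_heatSpectrum, heatSol_eq_integral_heatKernel, ← integral_complex_ofReal]
  refine integral_congr_ae (hU.mono fun y hy => ?_)
  simp only [hy, Complex.ofReal_mul]

lemma Lp_fourier_heatSpectrum_ae_eq_heatSol :
    (𝓕 (heatSpectrum hs U) : L²(EuclideanSpace ℝ (Fin d))) =ᵐ[volume]
      fun x => (heatSol d u₀ s x : ℂ) :=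
  (Lp_fourier_ae_eq_fourier _ (integrable_heatSpectrum hs U)).trans
    (Eventually.of_forall (fourier_heatSpectrum_eq_heatSol hU hs))

end HeatSolution

section Reconstruction

/-- The sinc series of scale `N` with samples `a` recovers `u` up to a remainder whose `L²` norm is
at most `B`. -/
def ReconstructsWithin (d : ℕ) (N : ℝ) (a : (Fin d → ℤ) → ℝ) (u : EuclideanSpace ℝ (Fin d) → ℝ)
    (B : ℝ) : Prop :=
  ∃ R : EuclideanSpace ℝ (Fin d) → ℝ, MemLp R 2 volume ∧ l2norm d R ≤ B ∧
    HasSumL2 d (fun n x => a n * fN d N n x) (fun x => u x - R x)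

variable {d : ℕ} {a : (Fin d → ℤ) → ℝ} {u : EuclideanSpace ℝ (Fin d) → ℝ}

lemma ReconstructsWithin.mono {N B B' : ℝ} (h : ReconstructsWithin d N a u B) (hB : B ≤ B') :
    ReconstructsWithin d N a u B' :=
  let ⟨R, hR, hnorm, hsum⟩ := h
  ⟨R, hR, hnorm.trans hB, hsum⟩

lemma eLpNorm_re_le {α : Type*} [MeasureSpace α] (h : L²(α)) :
    eLpNorm (fun x => (h x).re) 2 volume ≤ ENNReal.ofReal ‖h‖ := by
  rw [ofReal_norm, Lp.enorm_def]
  exact eLpNorm_mono fun x => Complex.abs_re_le_norm _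

lemma Lp_fourier_sub {V : Type*} [NormedAddCommGroup V] [InnerProductSpace ℝ V]
    [FiniteDimensional ℝ V] [MeasurableSpace V] [BorelSpace V] (f g : L²(V)) :
    𝓕 (f - g) = 𝓕 f - 𝓕 g :=
  map_sub (FourierTransform.fourierCLM ℂ (L²(V))) f g

lemma fourier_cubeFourier_ae_eq_fN (n : Fin d → ℤ) :
    (𝓕 (cubeFourier n) : L²(EuclideanSpace ℝ (Fin d))) =ᵐ[volume] fun x => (fN d 1 n x : ℂ) := by
  simp only [fN, one_mul]
  exact fourier_cubeFourier_ae_eq n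

lemma fourier_sum_smul_cubeFourier_ae_eq (t : Finset (Fin d → ℤ)) :
    (𝓕 (∑ n ∈ t, (a n : ℂ) • cubeFourier n) : L²(EuclideanSpace ℝ (Fin d))) =ᵐ[volume]
      fun x => ((∑ n ∈ t, a n * fN d 1 n x : ℝ) : ℂ) := by
  have hlinear : (𝓕 (∑ n ∈ t, (a n : ℂ) • cubeFourier n) : L²(EuclideanSpace ℝ (Fin d))) =
      ∑ n ∈ t, (a n : ℂ) • (𝓕 (cubeFourier n) : L²(EuclideanSpace ℝ (Fin d))) := by
    simp only [← FourierTransform.fourierCLM_apply (R := ℂ), map_sum, map_smul]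
  rw [hlinear]
  filter_upwards [Lp.coeFn_fun_finsetSum t fun n =>
      (a n : ℂ) • (𝓕 (cubeFourier n) : L²(EuclideanSpace ℝ (Fin d))),
    ae_all_iff.2 fun n => Lp.coeFn_smul (a n : ℂ)
      (𝓕 (cubeFourier n) : L²(EuclideanSpace ℝ (Fin d))),
    ae_all_iff.2 (fourier_cubeFourier_ae_eq_fN (d := d))] with x hsum hsmul hfN
  simp only [hsum, hsmul, Pi.smul_apply, hfN, smul_eq_mul, Complex.ofReal_sum, Complex.ofReal_mul]

lemma hasSumL2_re_fourier {S : L²(EuclideanSpace ℝ (Fin d))}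
    (hS : HasSum (fun n => (a n : ℂ) • cubeFourier n) S) :
    HasSumL2 d (fun n x => a n * fN d 1 n x)
      (fun x => ((𝓕 S : L²(EuclideanSpace ℝ (Fin d))) x).re) := by
  have hlim : Tendsto (fun t : Finset (Fin d → ℤ) =>
      ENNReal.ofReal ‖S - ∑ n ∈ t, (a n : ℂ) • cubeFourier n‖) atTop (𝓝 0) := by
    simpa using ENNReal.tendsto_ofReal (hS.const_sub S).norm
  refine tendsto_of_tendsto_of_tendsto_of_le_of_le tendsto_const_nhds hlim (fun _ => zero_le)
    fun t => ?_
  have herror : (fun x => ((𝓕 S : L²(EuclideanSpace ℝ (Fin d))) x).re -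
      ∑ n ∈ t, a n * fN d 1 n x) =ᵐ[volume] fun x =>
      ((𝓕 (S - ∑ n ∈ t, (a n : ℂ) • cubeFourier n) : L²(EuclideanSpace ℝ (Fin d))) x).re := by
    rw [Lp_fourier_sub]
    filter_upwards [fourier_sum_smul_cubeFourier_ae_eq t,
      Lp.coeFn_sub (𝓕 S : L²(EuclideanSpace ℝ (Fin d)))
        (𝓕 (∑ n ∈ t, (a n : ℂ) • cubeFourier n))] with x hsum hsub
    rw [hsub, Pi.sub_apply, hsum, Complex.sub_re, Complex.ofReal_re]
  beta_reduce
  rw [eLpNorm_congr_ae herror, ← Lp.norm_fourier_eq]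
  exact eLpNorm_re_le _

theorem reconstructsWithin_norm_sub {V S : L²(EuclideanSpace ℝ (Fin d))}
    (hV : (𝓕 V : L²(EuclideanSpace ℝ (Fin d))) =ᵐ[volume] fun x => (u x : ℂ))
    (hS : HasSum (fun n => (a n : ℂ) • cubeFourier n) S) :
    ReconstructsWithin d 1 a u ‖V - S‖ := by
  have hR : (fun x => u x - ((𝓕 S : L²(EuclideanSpace ℝ (Fin d))) x).re) =ᵐ[volume]
      fun x => ((𝓕 (V - S) : L²(EuclideanSpace ℝ (Fin d))) x).re := by
    rw [Lp_fourier_sub]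
    filter_upwards [hV, Lp.coeFn_sub (𝓕 V : L²(EuclideanSpace ℝ (Fin d))) (𝓕 S)] with x hu hsub
    rw [hsub, Pi.sub_apply, hu, Complex.sub_re, Complex.ofReal_re]
  have hmem := (Lp.memLp (𝓕 (V - S) : L²(EuclideanSpace ℝ (Fin d)))).re
  refine ⟨_, (memLp_congr_ae hR).2 hmem, ?_, ?_⟩
  · rw [l2norm, eLpNorm_congr_ae hR, ← Lp.norm_fourier_eq]
    exact ENNReal.toReal_le_of_le_ofReal (norm_nonneg _) (eLpNorm_re_le _)
  · simpa only [sub_sub_self] using hasSumL2_re_fourier hS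

end Reconstruction

section UnitLattice

lemma exp_neg_two_mul_le (d : ℕ) {s : ℝ} (hs : 1 ≤ s) :
    Real.exp (-2 * s) ≤ d.factorial * (s ^ (-(d : ℝ) / 4) * Real.exp (-s)) := by
  have hspos : 0 < s := one_pos.trans_le hs
  have hpow : s ^ ((d : ℝ) / 4) ≤ d.factorial * Real.exp s :=
    calc s ^ ((d : ℝ) / 4) ≤ s ^ (d : ℝ) :=
          Real.rpow_le_rpow_of_exponent_le hs (div_le_self d.cast_nonneg (by norm_num))
      _ = s ^ d := Real.rpow_natCast _ _
      _ ≤ d.factorial * Real.exp s :=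
          (div_le_iff₀' (by positivity)).1 (Real.pow_div_factorial_le_exp s hspos.le d)
  have hcancel : s ^ ((d : ℝ) / 4) * s ^ (-(d : ℝ) / 4) = 1 := by
    rw [← Real.rpow_add hspos, neg_div, add_neg_cancel, Real.rpow_zero]
  calc Real.exp (-2 * s)
      = s ^ ((d : ℝ) / 4) * s ^ (-(d : ℝ) / 4) * Real.exp (-2 * s) := by rw [hcancel, one_mul]
    _ ≤ d.factorial * Real.exp s * s ^ (-(d : ℝ) / 4) * Real.exp (-2 * s) := by gcongr
    _ = d.factorial * (s ^ (-(d : ℝ) / 4) * (Real.exp s * Real.exp (-2 * s))) := by ring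
    _ = _ := by rw [← Real.exp_add]; ring_nf

theorem exists_reconstructsWithin_heatSol_of_one_le (d : ℕ) :
    ∃ C : ℝ, 0 ≤ C ∧ ∀ {s ε : ℝ}, 1 ≤ s → ε ≤ 1 →
      ∀ {lam : (Fin d → ℤ) → EuclideanSpace ℝ (Fin d)}, (∀ n, ‖lam n - intVec n‖ ≤ ε) →
      ∀ {u₀ : EuclideanSpace ℝ (Fin d) → ℝ}, MemLp u₀ 2 volume →
      ReconstructsWithin d 1 (fun n => heatSol d u₀ s (lam n)) (heatSol d u₀ s)
        (C * (ε + Real.exp (-2 * s)) * l2norm d u₀) := by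
  obtain ⟨A, hA, halias⟩ := exists_hasSum_cubeFourier_norm_heatSpectrum_sub_le (Fin d)
  obtain ⟨B, hB, hdiff⟩ := exists_tsum_enorm_heatSol_sub_sq_le d
  refine ⟨A + B, by positivity, fun {s ε} hs hε lam hlam u₀ hu => ?_⟩
  have hε0 : 0 ≤ ε := (norm_nonneg _).trans (hlam 0)
  have hspos : 0 < s := one_pos.trans_le hs
  have hL : 0 ≤ l2norm d u₀ := l2norm_nonneg
  have hU : hu.ofReal.toLp =ᵐ[volume] fun y => (u₀ y : ℂ) := hu.ofReal.coeFn_toLp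
  obtain ⟨P, hP, hVP⟩ := halias hspos hu.ofReal.toLp hs
  obtain ⟨D, hD, hDnorm⟩ := exists_hasSum_smul_norm_le (orthonormal_cubeFourier (ι := Fin d))
    (a := fun n => ((heatSol d u₀ s (lam n) - heatSol d u₀ s (intVec n) : ℝ) : ℂ))
    (M := B * ε * l2norm d u₀) (by positivity)
    (by simpa only [← ofReal_norm, Complex.norm_real] using hdiff hs hε hlam hu)
  have hS : HasSum (fun n => (heatSol d u₀ s (lam n) : ℂ) • cubeFourier n) (P + D) := by
    simpa only [← add_smul, fourier_heatSpectrum_eq_heatSol hU hspos, ← Complex.ofReal_add,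
      add_sub_cancel] using hP.add hD
  refine (reconstructsWithin_norm_sub (Lp_fourier_heatSpectrum_ae_eq_heatSol hU hspos) hS).mono ?_
  calc ‖heatSpectrum hspos hu.ofReal.toLp - (P + D)‖
      ≤ ‖heatSpectrum hspos hu.ofReal.toLp - P‖ + ‖D‖ := by
        rw [← sub_sub]; exact norm_sub_le _ _
    _ ≤ A * Real.exp (-2 * s) * l2norm d u₀ + B * ε * l2norm d u₀ := by
        rw [← norm_eq_l2norm hU] at hDnorm ⊢
        exact add_le_add hVP hDnorm
    _ ≤ _ := by
        rw [← add_mul]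
        refine mul_le_mul_of_nonneg_right ?_ hL
        linarith [mul_nonneg hA hε0, mul_nonneg hB (Real.exp_pos (-2 * s)).le]

theorem exists_reconstructsWithin_heatSol_of_le_one (d : ℕ) :
    ∃ C : ℝ, 0 ≤ C ∧ ∀ {s : ℝ}, 0 < s → s ≤ 1 →
      ∀ {lam : (Fin d → ℤ) → EuclideanSpace ℝ (Fin d)}, (∀ n, ‖lam n - intVec n‖ ≤ 1) →
      ∀ {u₀ : EuclideanSpace ℝ (Fin d) → ℝ}, MemLp u₀ 2 volume →
      ReconstructsWithin d 1 (fun n => heatSol d u₀ s (lam n)) (heatSol d u₀ s)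
        (C * s ^ (-(d : ℝ) / 4) * l2norm d u₀) := by
  obtain ⟨C, hC, hsum⟩ := exists_tsum_enorm_heatSol_sq_le d
  refine ⟨1 + 2 * C, by positivity, fun {s} hs hs1 lam hlam u₀ hu => ?_⟩
  have hL : 0 ≤ l2norm d u₀ := l2norm_nonneg
  have hU : hu.ofReal.toLp =ᵐ[volume] fun y => (u₀ y : ℂ) := hu.ofReal.coeFn_toLp
  obtain ⟨S, hS, hSnorm⟩ := exists_hasSum_smul_norm_le (orthonormal_cubeFourier (ι := Fin d))
    (a := fun n => (heatSol d u₀ s (lam n) : ℂ))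
    (M := C * (1 + s ^ (-(d : ℝ) / 4)) * l2norm d u₀) (by positivity)
    (by simpa only [← ofReal_norm, Complex.norm_real] using hsum hs hlam hu)
  have hV : ‖heatSpectrum hs hu.ofReal.toLp‖ ≤ l2norm d u₀ :=
    (norm_heatSpectrum_le hs _).trans_eq ((norm_Lp_fourierInv _).trans (norm_eq_l2norm hU))
  have hpow : 1 ≤ s ^ (-(d : ℝ) / 4) := Real.one_le_rpow_of_pos_of_le_one_of_nonpos hs hs1
    (div_nonpos_of_nonpos_of_nonneg (neg_nonpos.2 d.cast_nonneg) zero_le_four)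
  refine (reconstructsWithin_norm_sub (Lp_fourier_heatSpectrum_ae_eq_heatSol hU hs) hS).mono ?_
  set X := s ^ (-(d : ℝ) / 4)
  calc ‖heatSpectrum hs hu.ofReal.toLp - S‖
      ≤ 1 * l2norm d u₀ + C * (1 + X) * l2norm d u₀ := by
        rw [one_mul]
        exact (norm_sub_le _ _).trans (add_le_add hV hSnorm)
    _ ≤ X * l2norm d u₀ + C * (X + X) * l2norm d u₀ := by gcongr
    _ = _ := by ring

theorem exists_reconstructsWithin_heatSol (d : ℕ) :
    ∃ C : ℝ, 0 < C ∧ ∀ {s ε : ℝ}, 0 < s → ε ≤ 1 →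
      ∀ {lam : (Fin d → ℤ) → EuclideanSpace ℝ (Fin d)}, (∀ n, ‖lam n - intVec n‖ ≤ ε) →
      ∀ {u₀ : EuclideanSpace ℝ (Fin d) → ℝ}, MemLp u₀ 2 volume →
      ReconstructsWithin d 1 (fun n => heatSol d u₀ s (lam n)) (heatSol d u₀ s)
        (C * (ε + s ^ (-(d : ℝ) / 4) * Real.exp (-s)) * l2norm d u₀) := by
  obtain ⟨A, hA, hlarge⟩ := exists_reconstructsWithin_heatSol_of_one_le d
  obtain ⟨B, hB, hsmall⟩ := exists_reconstructsWithin_heatSol_of_le_one d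
  refine ⟨A * d.factorial + B * Real.exp 1 + 1, by positivity,
    fun {s ε} hs hε lam hlam u₀ hu => ?_⟩
  have hε0 : 0 ≤ ε := (norm_nonneg _).trans (hlam 0)
  have hL : 0 ≤ l2norm d u₀ := l2norm_nonneg
  have hfactorial : (1 : ℝ) ≤ d.factorial := mod_cast d.factorial_pos
  set Z := s ^ (-(d : ℝ) / 4) * Real.exp (-s)
  have : 0 ≤ Z := by positivity
  rcases le_total 1 s with h1 | h1
  · refine (hlarge h1 hε hlam hu).mono (mul_le_mul_of_nonneg_right ?_ hL)
    calc A * (ε + Real.exp (-2 * s)) ≤ A * (d.factorial * ε + d.factorial * Z) := by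
          gcongr
          · exact le_mul_of_one_le_left hε0 hfactorial
          · exact exp_neg_two_mul_le d h1
      _ = A * d.factorial * (ε + Z) := by ring
      _ ≤ _ := by gcongr; linarith [mul_nonneg hB (Real.exp_pos 1).le]
  · refine (hsmall hs h1 (fun n => (hlam n).trans hε) hu).mono (mul_le_mul_of_nonneg_right ?_ hL)
    have hexp : 1 ≤ Real.exp 1 * Real.exp (-s) := by
      rw [← Real.exp_add]
      exact Real.one_le_exp (by linarith)
    calc B * s ^ (-(d : ℝ) / 4)
        ≤ B * s ^ (-(d : ℝ) / 4) * (Real.exp 1 * Real.exp (-s)) :=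
          le_mul_of_one_le_right (by positivity) hexp
      _ = B * Real.exp 1 * Z := by ring
      _ ≤ _ := by
          gcongr
          · linarith [mul_nonneg hA (zero_le_one.trans hfactorial)]
          · linarith

end UnitLattice

section Scaling

section HaarMeasure

variable {V F : Type*} [NormedAddCommGroup V] [NormedSpace ℝ V] [FiniteDimensional ℝ V]
  [MeasurableSpace V] [BorelSpace V] [NormedAddCommGroup F] {μ : Measure V} [μ.IsAddHaarMeasure]
  {p : ℝ≥0∞} {c : ℝ}

lemma eLpNorm_comp_smul (hp : p ≠ ⊤) (hc : c ≠ 0) (f : V → F) :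
    eLpNorm (fun x => f (c • x)) p μ =
      ENNReal.ofReal |(c ^ Module.finrank ℝ V)⁻¹| ^ (1 / p).toReal * eLpNorm f p μ := by
  rw [← smul_eq_mul, ← eLpNorm_smul_measure_of_ne_top hp, ← Measure.map_addHaar_smul μ hc]
  exact (Homeomorph.smulOfNeZero c hc).measurableEmbedding.eLpNorm_map_measure.symm

lemma memLp_comp_smul (hc : c ≠ 0) {f : V → F} (hf : MemLp f p μ) :
    MemLp (fun x => f (c • x)) p μ := by
  refine MemLp.comp_of_map (f := (c • ·)) ?_ (measurable_const_smul c).aemeasurable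
  rw [Measure.map_addHaar_smul μ hc]
  exact hf.smul_measure ENNReal.ofReal_ne_top

end HaarMeasure

variable {d : ℕ} {N : ℝ} (hN : 0 < N)
include hN

lemma eLpNorm_two_comp_smul (f : EuclideanSpace ℝ (Fin d) → ℝ) :
    eLpNorm (fun x => f (N • x)) 2 volume =
      ENNReal.ofReal (N ^ (-(d : ℝ) / 2)) * eLpNorm f 2 volume := by
  have hfactor : ((N ^ d)⁻¹ : ℝ) ^ (1 / 2 : ℝ) = N ^ (-(d : ℝ) / 2) := by
    rw [← Real.rpow_natCast, ← Real.rpow_neg hN.le, ← Real.rpow_mul hN.le, mul_one_div]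
  rw [eLpNorm_comp_smul ENNReal.ofNat_ne_top hN.ne', finrank_euclideanSpace_fin,
    abs_of_nonneg (by positivity), ENNReal.ofReal_rpow_of_nonneg (by positivity) (by positivity),
    ← hfactor]
  norm_num

lemma l2norm_comp_smul (f : EuclideanSpace ℝ (Fin d) → ℝ) :
    l2norm d (fun x => f (N • x)) = N ^ (-(d : ℝ) / 2) * l2norm d f := by
  rw [l2norm, eLpNorm_two_comp_smul hN, ENNReal.toReal_mul,
    ENNReal.toReal_ofReal (by positivity), l2norm]

lemma heatSol_comp_smul (u₀ : EuclideanSpace ℝ (Fin d) → ℝ) {t : ℝ} (ht : 0 < t)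
    (x : EuclideanSpace ℝ (Fin d)) :
    heatSol d (fun y => u₀ (N • y)) t x = heatSol d u₀ (t * N ^ 2) (N • x) := by
  have hexponent (y : EuclideanSpace ℝ (Fin d)) :
      -‖x - y‖ ^ 2 / (4 * t) = -‖N • x - N • y‖ ^ 2 / (4 * (t * N ^ 2)) := by
    rw [← smul_sub, norm_smul, Real.norm_of_nonneg hN.le]
    field_simp
  have hconstant : (4 * Real.pi * (t * N ^ 2)) ^ (-(d : ℝ) / 2) =
      (4 * Real.pi * t) ^ (-(d : ℝ) / 2) * (N ^ d)⁻¹ := by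
    rw [← mul_assoc, Real.mul_rpow (by positivity) (by positivity), ← Real.rpow_natCast N 2,
      ← Real.rpow_mul hN.le, ← Real.rpow_natCast N d, ← Real.rpow_neg hN.le]
    congr 2
    push_cast
    ring
  simp only [heatSol, hexponent, hconstant]
  rw [Measure.integral_comp_smul volume
    (fun y => Real.exp (-‖N • x - y‖ ^ 2 / (4 * (t * N ^ 2))) * u₀ y) N,
    finrank_euclideanSpace_fin, abs_of_nonneg (by positivity), smul_eq_mul]
  ring

lemma ReconstructsWithin.comp_smul {a : (Fin d → ℤ) → ℝ} {u : EuclideanSpace ℝ (Fin d) → ℝ}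
    {B : ℝ} (h : ReconstructsWithin d 1 a u B) :
    ReconstructsWithin d N a (fun x => u (N • x)) (N ^ (-(d : ℝ) / 2) * B) := by
  obtain ⟨R, hR, hnorm, hsum⟩ := h
  refine ⟨fun x => R (N • x), memLp_comp_smul hN.ne' hR, ?_, ?_⟩
  · rw [l2norm_comp_smul hN]
    gcongr
  · have hfN (n : Fin d → ℤ) (x : EuclideanSpace ℝ (Fin d)) : fN d N n x = fN d 1 n (N • x) := by
      simp only [fN, PiLp.smul_apply, smul_eq_mul, one_mul]
    have hlim := ENNReal.Tendsto.const_mul (a := ENNReal.ofReal (N ^ (-(d : ℝ) / 2))) hsum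
      (Or.inr ENNReal.ofReal_ne_top)
    simp only [mul_zero, ← eLpNorm_two_comp_smul hN, ← hfN] at hlim
    exact hlim

lemma norm_smul_sub_intVec_le {ε : ℝ} {n : Fin d → ℤ} {x : EuclideanSpace ℝ (Fin d)}
    (hx : ‖x - latticePt d N n‖ ≤ ε / N) : ‖N • x - intVec n‖ ≤ ε := by
  have hlattice : intVec n = N • latticePt d N n := by
    ext j
    simp [intVec, latticePt, mul_div_cancel₀ _ hN.ne']
  rw [hlattice, ← smul_sub, norm_smul, Real.norm_of_nonneg hN.le]
  exact (le_div_iff₀' hN).1 hx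

end Scaling

end HeatSampling

/-- Robustness of the asymptotic observability identity: there is `C = C(d) > 0` such that
for all `u₀ ∈ L²(ℝ^d)`, `T > 0`, `N > 0`, `ε ∈ (0,1)` and every family `(λ_n)_{n ∈ ℤ^d}`
with `|λ_n - n/N| ≤ ε/N`, there exists `R̃ ∈ L²(ℝ^d)` with
`‖R̃‖ ≤ C (ε + (1 + (TN²)^{-1/2}) (TN²)^{-d/4} e^{-TN²}) ‖u₀‖` and
`u(T,·) = Σ_{n ∈ ℤ^d} u(T, λ_n) f_{N,n} + R̃` in `L²(ℝ^d)`. -/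
theorem statement4 (d : ℕ) (hd : 0 < d) :
    ∃ C : ℝ, 0 < C ∧
      ∀ u₀ : EuclideanSpace ℝ (Fin d) → ℝ, MemLp u₀ 2 volume →
      ∀ T N ε : ℝ, 0 < T → 0 < N → ε ∈ Set.Ioo (0 : ℝ) 1 →
      ∀ lam : (Fin d → ℤ) → EuclideanSpace ℝ (Fin d),
        (∀ n, ‖lam n - latticePt d N n‖ ≤ ε / N) →
        ∃ R : EuclideanSpace ℝ (Fin d) → ℝ, MemLp R 2 volume ∧
          l2norm d R ≤
            C * (ε + (1 + (T * N ^ 2) ^ (-(1 : ℝ) / 2)) * (T * N ^ 2) ^ (-(d : ℝ) / 4)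
                * Real.exp (-(T * N ^ 2))) * l2norm d u₀ ∧
          HasSumL2 d (fun n x => heatSol d u₀ T (lam n) * fN d N n x)
            (fun x => heatSol d u₀ T x - R x) := by
  obtain ⟨C, hC, hunit⟩ := HeatSampling.exists_reconstructsWithin_heatSol d
  refine ⟨C, hC, fun u₀ hu T N ε hT hN hε lam hlam => ?_⟩
  have hrec := (hunit (s := T * N ^ 2) (by positivity) hε.2.le
    (fun n => HeatSampling.norm_smul_sub_intVec_le hN (hlam n))
    (HeatSampling.memLp_comp_smul (inv_ne_zero hN.ne') hu)).comp_smul hN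
  simp only [← HeatSampling.heatSol_comp_smul hN _ hT, smul_smul, inv_mul_cancel₀ hN.ne',
    one_smul] at hrec
  have hnorm := HeatSampling.l2norm_comp_smul hN (fun x => u₀ (N⁻¹ • x))
  simp only [inv_smul_smul₀ hN.ne'] at hnorm
  refine hrec.mono ?_
  rw [mul_left_comm, ← hnorm, mul_assoc (1 + _)]
  have hL : 0 ≤ l2norm d u₀ := HeatSampling.l2norm_nonneg
  have hfactor : 1 ≤ 1 + (T * N ^ 2) ^ (-(1 : ℝ) / 2) := le_add_of_nonneg_right (by positivity)
  gcongr C * (ε + ?_) * _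
  exact le_mul_of_one_le_left (by positivity) hfactor
end
end

section
/- Given s > d/2, there is a constant C = C(s,d) > 0 with the following property: for every continuous f ∈ L²(ℝ^d) with ∫_{ℝ^d} (1+|ξ|²)^s |f̂(ξ)|² dξ < ∞ and every N > 0, there exists R ∈ L²(ℝ^d) with ‖R‖ ≤ C (1 + N^{-d/2}) (∫_{ξ ∉ Q_{πN}(0)} (1+|ξ|²)^s |f̂(ξ)|² dξ)^{1/2} such that the family (f(n/N)·f_{N,n})_{n∈ℤ^d} is summable in L²(ℝ^d) and f = Σ_{n∈ℤ^d} f(n/N) f_{N,n} + R in L²(ℝ^d). -/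
open MeasureTheory Filter Topology Metric ENNReal NNReal

noncomputable section

/-!
Dilating by `N` reduces to sampling on `ℤ^d`. Write `f = 𝓕⁻ Φ`; since `x ↦ e^{2πi⟪x, n⟫}` is
`ℤ^d`-periodic, the values of `f` on `ℤ^d` depend only on the periodization of `Φ`, hence are also
those of `g = 𝓕⁻ Ψ`, where `Ψ` is that periodization cut off to the unit cube. By Plancherel,
expanding `Ψ` in its Fourier series on the cube gives the Whittaker–Shannon formula
`g = ∑ f(n) f_{1,n}`, so the remainder is `R = 𝓕⁻ (Φ - Ψ)`. Off the cube `Φ - Ψ = Φ`, and the weight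
`w(ξ) = (1 + |2πNξ|²)^s` is at least `1`. On the cube `Φ - Ψ = -∑_{n ≠ 0} Φ(· + n)`, and
Cauchy–Schwarz in `n` with weight `w` bounds its square by
`(∑_{n ≠ 0} w(· + n)⁻¹) ∑_{n ≠ 0} w(· + n) |Φ(· + n)|²`, where the first factor is at most
`∫ (1 + |cNξ|²)^{-s} dξ ≲ N^{-d}`, finite because `s > d/2`.
-/

section LpNorm

variable {α F : Type*} [MeasurableSpace α] {μ : Measure α} [NormedAddCommGroup F]

lemma eLpNorm_two_sq_eq_lintegral (f : α → F) : eLpNorm f 2 μ ^ 2 = ∫⁻ x, ‖f x‖ₑ ^ 2 ∂μ := by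
  simpa using eLpNorm_nnreal_pow_eq_lintegral (p := 2) (μ := μ) (f := f) two_ne_zero

lemma memLp_two_iff_lintegral_sq_ne_top {f : α → F} (hf : AEStronglyMeasurable f μ) :
    MemLp f 2 μ ↔ ∫⁻ x, ‖f x‖ₑ ^ 2 ∂μ ≠ ∞ := by
  rw [← eLpNorm_two_sq_eq_lintegral, MemLp, and_iff_right hf, lt_top_iff_ne_top, ne_eq, ne_eq,
    ENNReal.pow_eq_top_iff]
  simp

end LpNorm

section Fourier

open FourierTransform SchwartzMap
open scoped ContDiff

variable {V F : Type*} [NormedAddCommGroup V] [InnerProductSpace ℝ V] [FiniteDimensional ℝ V]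
  [MeasurableSpace V] [BorelSpace V] [NormedAddCommGroup F]

lemma continuous_fourierInv_of_integrable [NormedSpace ℂ F] {h : V → F} (hh : Integrable h) :
    Continuous (𝓕⁻ h) := by
  simpa only [Real.Lp.fourierTransformInv_toLp] using
    (Real.Lp.fourierTransformInv (memLp_one_iff_integrable.2 hh).toLp).continuous

lemma continuous_fourier_of_integrable [NormedSpace ℂ F] {h : V → F} (hh : Integrable h) :
    Continuous (𝓕 h) :=
  VectorFourier.fourierIntegral_continuous Real.continuous_fourierChar
    (L := innerₗ V) continuous_inner hh

lemma integral_fourier_smul_eq [NormedSpace ℂ F] [CompleteSpace F] {g : V → ℂ} {h : V → F}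
    (hg : Integrable g) (hh : Integrable h) : ∫ x, 𝓕 g x • h x = ∫ x, g x • 𝓕 h x := by
  have := VectorFourier.integral_fourierIntegral_smul_eq_flip (L := innerₗ V) (μ := volume)
    (ν := volume) Real.continuous_fourierChar continuous_inner hg hh
  rwa [flip_innerₗ] at this

lemma integral_fourierInv_smul_eq [NormedSpace ℂ F] [CompleteSpace F] {g : V → ℂ} {h : V → F}
    (hg : Integrable g) (hh : Integrable h) : ∫ x, 𝓕⁻ g x • h x = ∫ x, g x • 𝓕⁻ h x := by
  rw [Real.fourierInv_eq_fourier_comp_neg g, integral_fourier_smul_eq hg.comp_neg hh,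
    ← integral_neg_eq_self]
  simp only [neg_neg, Real.fourierInv_eq_fourier_neg]

lemma ae_eq_of_integral_schwartzMap_smul_eq [NormedSpace ℂ F] [CompleteSpace F] {f g : V → F}
    (hf : LocallyIntegrable f) (hg : LocallyIntegrable g)
    (h : ∀ φ : 𝓢(V, ℂ), ∫ x, φ x • f x = ∫ x, φ x • g x) : f =ᵐ[volume] g := by
  refine ae_eq_of_integral_contDiff_smul_eq hf hg fun φ hφ hsupp => ?_
  have hsupp' : HasCompactSupport (Complex.ofRealCLM ∘ φ) := hsupp.comp_left rfl
  have hφ' : ContDiff ℝ ∞ (Complex.ofRealCLM ∘ φ) := by fun_prop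
  simpa using h (hsupp'.toSchwartzMap hφ')

variable [InnerProductSpace ℂ F] [CompleteSpace F]

lemma fourier_toLp_ae_eq {h : V → F} (h1 : Integrable h) (h2 : MemLp h 2) :
    (𝓕 (h2.toLp h) : Lp F 2 (volume : Measure V)) =ᵐ[volume] 𝓕 h := by
  refine ae_eq_of_integral_schwartzMap_smul_eq ((Lp.memLp _).locallyIntegrable one_le_two)
    (continuous_fourier_of_integrable h1).locallyIntegrable fun φ => ?_
  have hdist := DFunLike.congr_fun (Lp.fourier_toTemperedDistribution_eq (h2.toLp h)) φ
  simp only [TemperedDistribution.fourier_apply, Lp.toTemperedDistribution_apply] at hdist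
  rw [← hdist, ← integral_fourier_smul_eq φ.integrable h1, SchwartzMap.fourier_coe]
  exact integral_congr_ae (h2.coeFn_toLp.mono fun x hx => by simp only [hx])

lemma fourierInv_toLp_ae_eq {h : V → F} (h1 : Integrable h) (h2 : MemLp h 2) :
    (𝓕⁻ (h2.toLp h) : Lp F 2 (volume : Measure V)) =ᵐ[volume] 𝓕⁻ h := by
  refine ae_eq_of_integral_schwartzMap_smul_eq ((Lp.memLp _).locallyIntegrable one_le_two)
    (continuous_fourierInv_of_integrable h1).locallyIntegrable fun φ => ?_
  have hdist := DFunLike.congr_fun (Lp.fourierInv_toTemperedDistribution_eq (h2.toLp h)) φ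
  simp only [TemperedDistribution.fourierInv_apply, Lp.toTemperedDistribution_apply] at hdist
  rw [← hdist, ← integral_fourierInv_smul_eq φ.integrable h1, SchwartzMap.fourierInv_coe]
  exact integral_congr_ae (h2.coeFn_toLp.mono fun x hx => by simp only [hx])

lemma memLp_two_fourierInv {h : V → F} (h1 : Integrable h) (h2 : MemLp h 2) : MemLp (𝓕⁻ h) 2 :=
  (memLp_congr_ae (fourierInv_toLp_ae_eq h1 h2)).1 (Lp.memLp _)

theorem eLpNorm_two_fourierInv {h : V → F} (h1 : Integrable h) (h2 : MemLp h 2) :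
    eLpNorm (𝓕⁻ h) 2 = eLpNorm h 2 := by
  have hiso : ‖(𝓕⁻ (h2.toLp h) : Lp F 2 (volume : Measure V))‖ₑ = ‖h2.toLp h‖ₑ :=
    (Lp.fourierTransformₗᵢ V F).symm.toLinearIsometry.enorm_map _
  rwa [Lp.enorm_def, Lp.enorm_def, eLpNorm_congr_ae (fourierInv_toLp_ae_eq h1 h2),
    eLpNorm_congr_ae h2.coeFn_toLp] at hiso

theorem ae_eq_fourierInv_of_tendsto_fourier {ι : Type*} {l : Filter ι} [l.NeBot] {f Φ : V → F}
    {h : ι → V → F} (hf : MemLp f 2) (hΦ1 : Integrable Φ) (hΦ2 : MemLp Φ 2)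
    (h1 : ∀ i, Integrable (h i)) (h2 : ∀ i, MemLp (h i) 2)
    (hlim : Tendsto (fun i => eLpNorm (h i - f) 2) l (𝓝 0))
    (hlim_fourier : Tendsto (fun i => eLpNorm (𝓕 (h i) - Φ) 2) l (𝓝 0)) :
    f =ᵐ[volume] 𝓕⁻ Φ := by
  have hlim_Lp : Tendsto (fun i => (h2 i).toLp (h i)) l (𝓝 (hf.toLp f)) :=
    (Lp.tendsto_Lp_iff_tendsto_eLpNorm'' _ h2 _ hf).2 hlim
  have hlim_fourier_Lp : Tendsto (fun i => 𝓕 ((h2 i).toLp (h i))) l (𝓝 (hΦ2.toLp Φ)) := by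
    rw [Lp.tendsto_Lp_iff_tendsto_eLpNorm']
    refine hlim_fourier.congr fun i => eLpNorm_congr_ae ?_
    exact (fourier_toLp_ae_eq (h1 i) (h2 i)).symm.sub hΦ2.coeFn_toLp.symm
  have hfourier : 𝓕 (hf.toLp f) = hΦ2.toLp Φ := tendsto_nhds_unique
    (((Lp.fourierTransformₗᵢ V F).continuous.tendsto _).comp hlim_Lp) hlim_fourier_Lp
  calc f =ᵐ[volume] hf.toLp f := hf.coeFn_toLp.symm
    _ = 𝓕⁻ (hΦ2.toLp Φ) := by rw [← hfourier, FourierTransform.fourierInv_fourier_eq]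
    _ =ᵐ[volume] 𝓕⁻ Φ := fourierInv_toLp_ae_eq hΦ1 hΦ2

end Fourier

section Dilation

variable {V F : Type*} [NormedAddCommGroup V] [NormedSpace ℝ V] [FiniteDimensional ℝ V]
  [MeasurableSpace V] [BorelSpace V] {μ : Measure V} [μ.IsAddHaarMeasure]
  [NormedAddCommGroup F] {r : ℝ}

open Module

lemma setLIntegral_comp_smul (hr : r ≠ 0) (g : V → ℝ≥0∞) (s : Set V) :
    ∫⁻ x in (r • ·) ⁻¹' s, g (r • x) ∂μ =
      ENNReal.ofReal |(r ^ finrank ℝ V)⁻¹| * ∫⁻ x in s, g x ∂μ := by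
  have hemb : MeasurableEmbedding (r • · : V → V) := measurableEmbedding_const_smul₀ hr
  rw [← hemb.lintegral_map, ← hemb.restrict_map, Measure.map_addHaar_smul μ hr,
    Measure.restrict_smul, lintegral_smul_measure, smul_eq_mul]

lemma lintegral_comp_smul (hr : r ≠ 0) (g : V → ℝ≥0∞) :
    ∫⁻ x, g (r • x) ∂μ = ENNReal.ofReal |(r ^ finrank ℝ V)⁻¹| * ∫⁻ x, g x ∂μ := by
  simpa using setLIntegral_comp_smul hr g Set.univ

lemma eLpNorm_comp_smul {p : ℝ≥0∞} (hp : p ≠ ∞) (hr : r ≠ 0) (g : V → F) :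
    eLpNorm (fun x => g (r • x)) p μ =
      ENNReal.ofReal |(r ^ finrank ℝ V)⁻¹| ^ (1 / p).toReal * eLpNorm g p μ := by
  have hemb : MeasurableEmbedding (r • · : V → V) := measurableEmbedding_const_smul₀ hr
  rw [← smul_eq_mul, ← eLpNorm_smul_measure_of_ne_top hp, ← Measure.map_addHaar_smul μ hr,
    hemb.eLpNorm_map_measure, Function.comp_def]

lemma memLp_comp_smul {p : ℝ≥0∞} (hp : p ≠ ∞) (hr : r ≠ 0) {g : V → F} (hg : MemLp g p μ) :
    MemLp (fun x => g (r • x)) p μ := by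
  refine ⟨hg.1.comp_quasiMeasurePreserving
    (Measure.quasiMeasurePreserving_smul μ hr), ?_⟩
  rw [eLpNorm_comp_smul hp hr]
  exact ENNReal.mul_lt_top (by finiteness) hg.2

lemma tendsto_eLpNorm_comp_smul {p : ℝ≥0∞} (hp : p ≠ ∞) (hr : r ≠ 0) {κ : Type*} {l : Filter κ}
    {g : κ → V → F} (hg : Tendsto (fun i => eLpNorm (g i) p μ) l (𝓝 0)) :
    Tendsto (fun i => eLpNorm (fun x => g i (r • x)) p μ) l (𝓝 0) := by
  simp only [eLpNorm_comp_smul hp hr]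
  simpa only [mul_zero] using ENNReal.Tendsto.const_mul hg (.inr (by finiteness))

end Dilation

lemma tsum_sq_le_tsum_mul_tsum_of_sq_le_mul {ι : Type*} {a v b : ι → ℝ≥0∞}
    (h : ∀ i, a i ^ 2 ≤ v i * b i) : (∑' i, a i) ^ 2 ≤ (∑' i, v i) * ∑' i, b i := by
  let _ : MeasurableSpace ι := ⊤
  have hsqrt : ∀ x : ℝ≥0∞, (x ^ (2⁻¹ : ℝ)) ^ 2 = x := fun x => by
    rw [← ENNReal.rpow_natCast, ← ENNReal.rpow_mul]; norm_num
  have hterm : ∀ i, a i ≤ v i ^ (2⁻¹ : ℝ) * b i ^ (2⁻¹ : ℝ) := fun i => by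
    rw [← ENNReal.pow_le_pow_left_iff two_ne_zero, mul_pow, hsqrt, hsqrt]
    exact h i
  have hhoelder := ENNReal.lintegral_mul_le_Lp_mul_Lq (Measure.count : Measure ι)
    Real.HolderConjugate.two_two (f := fun i => v i ^ (2⁻¹ : ℝ)) (g := fun i => b i ^ (2⁻¹ : ℝ))
    measurable_from_top.aemeasurable measurable_from_top.aemeasurable
  simp only [lintegral_count, Pi.mul_apply, ENNReal.rpow_two, hsqrt, one_div] at hhoelder
  calc (∑' i, a i) ^ 2
      ≤ ((∑' i, v i) ^ (2⁻¹ : ℝ) * (∑' i, b i) ^ (2⁻¹ : ℝ)) ^ 2 := by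
        gcongr; exact (ENNReal.tsum_le_tsum hterm).trans hhoelder
    _ = (∑' i, v i) * ∑' i, b i := by rw [mul_pow, hsqrt, hsqrt]

section Periodization

/-- The periodization `x ↦ ∑_g Φ (g + x)` of a function along the orbits of a group action. -/
def periodization (G : Type*) {α F : Type*} [VAdd G α] [AddCommMonoid F] [TopologicalSpace F]
    (Φ : α → F) (x : α) : F :=
  ∑' g : G, Φ (g +ᵥ x)

lemma periodization_smul_of_invariant {G α F M : Type*} [VAdd G α] [AddCommMonoid F]
    [TopologicalSpace F] [T2Space F] [Group M] [DistribMulAction M F] [ContinuousConstSMul M F]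
    {χ : α → M} (hχ : ∀ (g : G) x, χ (g +ᵥ x) = χ x) (Φ : α → F) (x : α) :
    periodization G (fun x => χ x • Φ x) x = χ x • periodization G Φ x := by
  simp only [periodization, hχ, tsum_const_smul']

variable {G α F : Type*} [AddGroup G] [AddAction G α] [MeasurableSpace α]
  [MeasurableConstVAdd G α] {μ : Measure α} [VAddInvariantMeasure G α μ] {P : Set α}

lemma quasiMeasurePreserving_vadd_restrict (g : G) :
    Measure.QuasiMeasurePreserving (g +ᵥ · : α → α) (μ.restrict P) μ :=
  (measurePreserving_vadd g μ).quasiMeasurePreserving.mono_left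
    Measure.restrict_le_self.absolutelyContinuous

variable [Countable G]

lemma lintegral_periodization (hP : IsAddFundamentalDomain G P μ) {u : α → ℝ≥0∞}
    (hu : AEMeasurable u μ) : ∫⁻ x in P, periodization G u x ∂μ = ∫⁻ x, u x ∂μ := by
  rw [hP.lintegral_eq_tsum'']
  exact lintegral_tsum fun g =>
    hu.comp_quasiMeasurePreserving (quasiMeasurePreserving_vadd_restrict g)

variable [NormedAddCommGroup F] {Φ : α → F}

lemma ae_summable_vadd [CompleteSpace F] (hP : IsAddFundamentalDomain G P μ)
    (hΦ : Integrable Φ μ) : ∀ᵐ x ∂μ.restrict P, Summable fun g : G => Φ (g +ᵥ x) := by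
  have hfin : ∫⁻ x in P, periodization G (fun y => ‖Φ y‖ₑ) x ∂μ ≠ ∞ := by
    rw [lintegral_periodization hP hΦ.1.enorm]
    exact hΦ.2.ne
  have hmeas : AEMeasurable (periodization G fun y => ‖Φ y‖ₑ) (μ.restrict P) :=
    AEMeasurable.tsum fun g =>
      hΦ.1.enorm.comp_quasiMeasurePreserving (quasiMeasurePreserving_vadd_restrict g)
  filter_upwards [ae_lt_top' hmeas hfin] with x hx
  exact Summable.of_nnnorm (ENNReal.tsum_coe_ne_top_iff_summable.1 hx.ne)

lemma aestronglyMeasurable_periodization [CompleteSpace F] (hP : IsAddFundamentalDomain G P μ)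
    (hΦ : Integrable Φ μ) : AEStronglyMeasurable (periodization G Φ) (μ.restrict P) := by
  refine aestronglyMeasurable_of_tendsto_ae (atTop : Filter (Finset G))
    (f := fun s x => ∑ g ∈ s, Φ (g +ᵥ x)) (fun s => ?_) ?_
  · exact Finset.aestronglyMeasurable_fun_sum s fun g _ =>
      hΦ.1.comp_quasiMeasurePreserving (quasiMeasurePreserving_vadd_restrict g)
  · filter_upwards [ae_summable_vadd (G := G) hP hΦ] with x hx
    exact hx.hasSum

lemma integrableOn_periodization [CompleteSpace F] (hP : IsAddFundamentalDomain G P μ)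
    (hΦ : Integrable Φ μ) : IntegrableOn (periodization G Φ) P μ := by
  refine ⟨aestronglyMeasurable_periodization hP hΦ, ?_⟩
  calc ∫⁻ x in P, ‖periodization G Φ x‖ₑ ∂μ
      ≤ ∫⁻ x in P, periodization G (fun y => ‖Φ y‖ₑ) x ∂μ :=
        lintegral_mono fun _ => enorm_tsum_le_tsum_enorm
    _ = ∫⁻ x, ‖Φ x‖ₑ ∂μ := lintegral_periodization hP hΦ.1.enorm
    _ < ∞ := hΦ.2

theorem integral_periodization [NormedSpace ℝ F] (hP : IsAddFundamentalDomain G P μ)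
    (hΦ : Integrable Φ μ) : ∫ x in P, periodization G Φ x ∂μ = ∫ x, Φ x ∂μ := by
  rw [hP.integral_eq_tsum'' _ hΦ]
  refine integral_tsum
    (fun g => hΦ.1.comp_quasiMeasurePreserving (quasiMeasurePreserving_vadd_restrict g)) ?_
  rw [← hP.lintegral_eq_tsum'' fun x => ‖Φ x‖ₑ]
  exact hΦ.2.ne

theorem setLIntegral_sq_periodization_le (hP : IsAddFundamentalDomain G P μ)
    (hPm : MeasurableSet P) {u v : α → ℝ≥0∞} {A : ℝ≥0∞} (hu : AEMeasurable u μ)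
    (hΦ : ∀ x, ‖Φ x‖ₑ ^ 2 ≤ v x * u x) (hv : ∀ x ∈ P, periodization G v x ≤ A) :
    ∫⁻ x in P, ‖periodization G Φ x‖ₑ ^ 2 ∂μ ≤ A * ∫⁻ x, u x ∂μ := by
  have hum : AEMeasurable (periodization G u) (μ.restrict P) :=
    AEMeasurable.tsum fun g =>
      hu.comp_quasiMeasurePreserving (quasiMeasurePreserving_vadd_restrict g)
  rw [← lintegral_periodization hP hu, ← lintegral_const_mul'' _ hum]
  refine setLIntegral_mono' hPm fun x hx => ?_
  calc ‖periodization G Φ x‖ₑ ^ 2 ≤ (∑' g : G, ‖Φ (g +ᵥ x)‖ₑ) ^ 2 := by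
        gcongr; exact enorm_tsum_le_tsum_enorm
    _ ≤ periodization G v x * periodization G u x :=
        tsum_sq_le_tsum_mul_tsum_of_sq_le_mul fun g => hΦ (g +ᵥ x)
    _ ≤ A * periodization G u x := by gcongr; exact hv x hx

end Periodization

section Lattice

open FourierTransform RealInnerProductSpace

variable {ι : Type*}

/-- The inclusion of the lattice `ℤ^ι` into Euclidean space. -/
def intVec : (ι → ℤ) →+ EuclideanSpace ℝ ι where
  toFun n := WithLp.toLp 2 fun i => (n i : ℝ)
  map_zero' := by ext; simp
  map_add' _ _ := by ext; simp

@[simp] lemma intVec_apply (n : ι → ℤ) (i : ι) : intVec n i = n i := rfl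

/-- The lattice `ℤ^ι` acts on Euclidean space by translations. -/
local instance latticeAction : AddAction (ι → ℤ) (EuclideanSpace ℝ ι) :=
  AddAction.compHom _ intVec

lemma lattice_vadd_eq (n : ι → ℤ) (x : EuclideanSpace ℝ ι) : n +ᵥ x = intVec n + x := rfl

/-- The half-open unit cube centered at the origin. It contains exactly one point of every
`ℤ^ι`-orbit. -/
def unitCube : Set (EuclideanSpace ℝ ι) := {x | ∀ i, x i ∈ Set.Ioc (-1 / 2 : ℝ) (1 / 2)}

lemma existsUnique_vadd_mem_unitCube (x : EuclideanSpace ℝ ι) :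
    ∃! n : ι → ℤ, n +ᵥ x ∈ unitCube := by
  have hiff : ∀ n : ι → ℤ, n +ᵥ x ∈ unitCube ↔ ∀ i, -n i = ⌈x i - 1 / 2⌉ := fun n =>
    forall_congr' fun i => by
      rw [eq_comm, Int.ceil_eq_iff, lattice_vadd_eq, PiLp.add_apply, intVec_apply, Set.mem_Ioc]
      push_cast
      constructor <;> rintro ⟨h1, h2⟩ <;> constructor <;> linarith
  refine ⟨fun i => -⌈x i - 1 / 2⌉, (hiff _).2 fun i => neg_neg _, fun n hn => ?_⟩
  ext i
  rw [← (hiff n).1 hn i, neg_neg]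

lemma vadd_mem_unitCube_iff {x : EuclideanSpace ℝ ι} (hx : x ∈ unitCube) {n : ι → ℤ} :
    n +ᵥ x ∈ unitCube ↔ n = 0 :=
  ⟨fun hn => (existsUnique_vadd_mem_unitCube x).unique hn (by rwa [zero_vadd]),
    fun hn => by rwa [hn, zero_vadd]⟩

lemma measurableSet_unitCube [Countable ι] :
    MeasurableSet (unitCube : Set (EuclideanSpace ℝ ι)) :=
  (MeasurableSet.univ_pi' fun _ => measurableSet_Ioc).preimage (WithLp.measurable_ofLp 2 _)

local instance measurableConstVAdd_lattice : MeasurableConstVAdd (ι → ℤ) (EuclideanSpace ℝ ι) :=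
  ⟨fun n => (WithLp.measurable_toLp 2 (ι → ℝ)).comp <|
    (measurable_const_add fun i => (n i : ℝ)).comp (WithLp.measurable_ofLp 2 (ι → ℝ))⟩

variable [Fintype ι]

local instance vaddInvariantMeasure_lattice :
    VAddInvariantMeasure (ι → ℤ) (EuclideanSpace ℝ ι) volume :=
  ⟨fun n _ _ => measure_preimage_add volume (intVec n) _⟩

lemma isAddFundamentalDomain_unitCube :
    IsAddFundamentalDomain (ι → ℤ) (unitCube : Set (EuclideanSpace ℝ ι)) volume :=
  .mk' measurableSet_unitCube.nullMeasurableSet existsUnique_vadd_mem_unitCube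

lemma fourierChar_inner_intVec (x : EuclideanSpace ℝ ι) (n : ι → ℤ) :
    (𝐞 ⟪x, intVec n⟫ : ℂ) = UnitAddTorus.mFourier n fun i => (x i : UnitAddCircle) := by
  rw [UnitAddTorus.mFourier, ContinuousMap.coe_mk, Real.fourierChar_apply, PiLp.inner_apply]
  simp only [fourier_coe_apply, ← Complex.exp_sum, Finset.mul_sum, Finset.sum_mul,
    Complex.ofReal_sum]
  congr! 2 with i
  simp only [intVec_apply, RCLike.inner_apply, Real.ringHom_apply, Complex.ofReal_mul,
    Complex.ofReal_ofNat, Complex.ofReal_intCast, Complex.ofReal_one, div_one]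
  ring

lemma fourierChar_inner_vadd (n m : ι → ℤ) (x : EuclideanSpace ℝ ι) :
    𝐞 ⟪m +ᵥ x, intVec n⟫ = 𝐞 ⟪x, intVec n⟫ := by
  apply Subtype.ext
  simp only [fourierChar_inner_intVec, lattice_vadd_eq, PiLp.add_apply, intVec_apply,
    AddCircle.coe_add]
  congr! 2 with i
  simp

end Lattice

section CubeFourierSeries

open FourierTransform RealInnerProductSpace UnitAddTorus

/-- The circle `ℝ/ℤ` with its Haar probability measure: the normalization for which
`UnitAddTorus.hasSum_mFourier_series_L2` is stated. -/
local instance unitAddCircleMeasureSpace : MeasureSpace UnitAddCircle :=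
  ⟨AddCircle.haarAddCircle⟩

local instance isProbabilityMeasure_unitAddCircle :
    IsProbabilityMeasure (volume : Measure UnitAddCircle) :=
  inferInstanceAs (IsProbabilityMeasure AddCircle.haarAddCircle)

variable {ι : Type*}

/-- The measurable section of `ℝ^ι → (ℝ/ℤ)^ι` with values in the half-open unit cube. -/
def torusSection (t : UnitAddTorus ι) : EuclideanSpace ℝ ι :=
  WithLp.toLp 2 (measurableEquivPiIoc (fun _ => -1 / 2) t).1

lemma coe_torusSection (t : UnitAddTorus ι) :
    (fun i => (torusSection t i : UnitAddCircle)) = t :=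
  (measurableEquivPiIoc fun _ => -1 / 2).symm_apply_apply t

variable [Fintype ι]

lemma tendsto_eLpNorm_sub_sum_mFourier_neg {f : UnitAddTorus ι → ℂ} (hf : MemLp f 2) :
    Tendsto (fun s : Finset (ι → ℤ) =>
      eLpNorm (f - ⇑(∑ n ∈ s, mFourierCoeff f (-n) • mFourier (-n))) 2 volume)
      atTop (𝓝 0) := by
  have hcoeff : mFourierCoeff (hf.toLp f) = mFourierCoeff f := funext fun n =>
    integral_congr_ae (hf.coeFn_toLp.mono fun t ht => by beta_reduce; rw [ht])
  have hsum := (Equiv.neg (ι → ℤ)).hasSum_iff.2 (hasSum_mFourier_series_L2 (hf.toLp f))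
  rw [hcoeff, HasSum, Lp.tendsto_Lp_iff_tendsto_eLpNorm] at hsum
  refine hsum.congr fun s => ?_
  rw [eLpNorm_sub_comm]
  simp only [Function.comp_apply, Equiv.neg_apply, mFourierLp, ← map_smul, ← map_sum]
  exact eLpNorm_congr_ae (.sub .rfl (ContinuousMap.coeFn_toLp volume _))

lemma measurePreserving_torusSection :
    MeasurePreserving (torusSection (ι := ι)) volume (volume.restrict unitCube) := by
  set Q : Set (ι → ℝ) := {x | ∀ i, x i ∈ Set.Ioc (-1 / 2 : ℝ) (-1 / 2 + 1)}
  have hQ : WithLp.toLp 2 ⁻¹' unitCube = Q := by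
    ext x
    simp only [unitCube, Q, Set.mem_preimage, Set.mem_ofPred_eq]
    norm_num
  have hval : MeasurePreserving (Subtype.val : Q → ι → ℝ) (Measure.comap Subtype.val volume)
      (volume.restrict Q) :=
    ⟨measurable_subtype_coe,
      map_comap_subtype_coe (MeasurableSet.univ_pi' fun _ => measurableSet_Ioc) _⟩
  have htoLp := (PiLp.volume_preserving_toLp ι).restrict_preimage measurableSet_unitCube
  rw [hQ] at htoLp
  exact (htoLp.comp hval).comp (measurePreserving_equivPiIoc fun _ => -1 / 2)

local instance isProbabilityMeasure_restrict_unitCube :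
    IsProbabilityMeasure (volume.restrict (unitCube : Set (EuclideanSpace ℝ ι))) := by
  rw [← measurePreserving_torusSection.map_eq]
  exact Measure.isProbabilityMeasure_map measurePreserving_torusSection.aemeasurable

lemma mFourierCoeff_comp_torusSection {h : EuclideanSpace ℝ ι → ℂ}
    (hh : AEStronglyMeasurable h (volume.restrict unitCube)) (n : ι → ℤ) :
    mFourierCoeff (h ∘ torusSection) (-n) = ∫ x in unitCube, 𝐞 ⟪x, intVec n⟫ • h x := by
  have hmeas : AEStronglyMeasurable (fun x => 𝐞 ⟪x, intVec n⟫ • h x)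
      (volume.restrict unitCube) := by
    refine AEStronglyMeasurable.smul (Continuous.aestronglyMeasurable ?_) hh
    fun_prop
  rw [← measurePreserving_torusSection.map_eq] at hmeas ⊢
  rw [integral_map measurePreserving_torusSection.aemeasurable hmeas]
  simp only [mFourierCoeff, neg_neg, Function.comp_apply, Circle.smul_def,
    fourierChar_inner_intVec, coe_torusSection]

theorem tendsto_eLpNorm_sub_sum_fourierChar {h : EuclideanSpace ℝ ι → ℂ}
    (hh : MemLp h 2 (volume.restrict unitCube)) :
    Tendsto (fun s : Finset (ι → ℤ) => eLpNorm (fun x => h x - ∑ n ∈ s,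
      (∫ y in unitCube, 𝐞 ⟪y, intVec n⟫ • h y) * 𝐞 (-⟪x, intVec n⟫)) 2
      (volume.restrict unitCube)) atTop (𝓝 0) := by
  refine (tendsto_eLpNorm_sub_sum_mFourier_neg
    (hh.comp_measurePreserving measurePreserving_torusSection)).congr fun s => ?_
  have hmeas : AEStronglyMeasurable (fun x => h x - ∑ n ∈ s,
      (∫ y in unitCube, 𝐞 ⟪y, intVec n⟫ • h y) * 𝐞 (-⟪x, intVec n⟫))
      (volume.restrict unitCube) := by
    refine hh.1.sub (Continuous.aestronglyMeasurable ?_)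
    fun_prop
  rw [← eLpNorm_comp_measurePreserving hmeas measurePreserving_torusSection]
  congr 1
  ext t
  simp only [Pi.sub_apply, Function.comp_apply, mFourierCoeff_comp_torusSection hh.1,
    ContinuousMap.coe_sum, Finset.sum_apply, ContinuousMap.coe_smul, Pi.smul_apply, smul_eq_mul]
  congr! 3 with n
  rw [← inner_neg_right, ← map_neg, fourierChar_inner_intVec, coe_torusSection]

end CubeFourierSeries

section FourierInv

open FourierTransform RealInnerProductSpace

variable {V F : Type*} [NormedAddCommGroup V] [InnerProductSpace ℝ V] [MeasurableSpace V]
  [BorelSpace V] [FiniteDimensional ℝ V] [NormedAddCommGroup F] [NormedSpace ℂ F]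

lemma fourierInv_fourierChar_smul (f : V → F) (a x : V) :
    𝓕⁻ (fun v => 𝐞 (-⟪v, a⟫) • f v) x = 𝓕⁻ f (x - a) := by
  simp only [Real.fourierInv_eq, sub_eq_add_neg, inner_add_right, inner_neg_right,
    AddChar.map_add_eq_mul, mul_smul]

lemma integrable_fourierChar_inner_smul {f : V → F} (hf : Integrable f) (x : V) :
    Integrable fun v => 𝐞 ⟪v, x⟫ • f v := by
  simpa using (Real.fourierIntegral_convergent_iff (-x)).2 hf

lemma fourierInv_sub_of_integrable {f g : V → F} (hf : Integrable f) (hg : Integrable g) :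
    𝓕⁻ (f - g) = 𝓕⁻ f - 𝓕⁻ g := by
  ext x
  simp only [Pi.sub_apply, Real.fourierInv_eq, smul_sub]
  exact integral_sub (integrable_fourierChar_inner_smul hf x)
    (integrable_fourierChar_inner_smul hg x)

lemma fourierInv_sum_of_integrable {κ : Type*} (s : Finset κ) {f : κ → V → F}
    (hf : ∀ k ∈ s, Integrable (f k)) : 𝓕⁻ (∑ k ∈ s, f k) = ∑ k ∈ s, 𝓕⁻ (f k) := by
  ext x
  simp only [Finset.sum_apply, Real.fourierInv_eq, Finset.smul_sum]
  exact integral_finsetSum s fun k hk => integrable_fourierChar_inner_smul (hf k hk) x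

lemma fourierInv_const_smul (c : ℂ) (f : V → F) : 𝓕⁻ (c • f) = c • 𝓕⁻ f := by
  ext x
  simp only [Pi.smul_apply, Real.fourierInv_eq, smul_comm _ c, integral_smul]

lemma fourierInv_fun_comp_smul {r : ℝ} (hr : 0 < r) (f : V → F) (x : V) :
    𝓕⁻ (fun v => (r ^ Module.finrank ℝ V) • f (r • v)) x = 𝓕⁻ f (r⁻¹ • x) := by
  have h := Measure.integral_comp_smul_of_nonneg volume
    (fun v => 𝐞 ⟪v, r⁻¹ • x⟫ • f v) r (hR := hr.le)
  have hpow : r ^ Module.finrank ℝ V ≠ 0 := by positivity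
  simp only [inner_smul_left, inner_smul_right, conj_trivial, inv_mul_cancel_left₀ hr.ne'] at h
  simp only [Real.fourierInv_eq, smul_comm _ (r ^ Module.finrank ℝ V), integral_smul,
    inner_smul_right, h, smul_inv_smul₀ hpow]

lemma fourierInv_prod_apply {ι : Type*} [Fintype ι] (g : ι → ℝ → ℂ) (x : EuclideanSpace ℝ ι) :
    𝓕⁻ (fun v : EuclideanSpace ℝ ι => ∏ i, g i (v i)) x = ∏ i, 𝓕⁻ (g i) (x i) := by
  simp only [Real.fourierInv_eq']
  rw [← (PiLp.volume_preserving_toLp ι).integral_comp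
      (MeasurableEquiv.toLp 2 (ι → ℝ)).measurableEmbedding, ← integral_fintype_prod_volume_eq_prod]
  congr! 1
  simp only [PiLp.inner_apply, smul_eq_mul, Finset.prod_mul_distrib, ← Complex.exp_sum,
    Finset.mul_sum, Finset.sum_mul, Complex.ofReal_sum]

lemma fourierInv_indicator_Ioc_one (t : ℝ) :
    𝓕⁻ ((Set.Ioc (-1 / 2 : ℝ) (1 / 2)).indicator (1 : ℝ → ℂ)) t = Real.sinc (Real.pi * t) := by
  have hsmul : ∀ v : ℝ, Complex.exp (↑(2 * Real.pi * ⟪v, t⟫) * Complex.I) •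
      (Set.Ioc (-1 / 2 : ℝ) (1 / 2)).indicator (1 : ℝ → ℂ) v =
      (Set.Ioc (-1 / 2 : ℝ) (1 / 2)).indicator
        (fun v => Complex.exp (↑(2 * Real.pi * t * v) * Complex.I)) v := fun v => by
    rw [RCLike.inner_apply, conj_trivial, ← mul_assoc, smul_eq_mul, Set.indicator_apply,
      Set.indicator_apply, Pi.one_apply, mul_ite, mul_one, mul_zero]
  rw [Real.fourierInv_eq', integral_congr_ae (.of_forall hsmul),
    integral_indicator measurableSet_Ioc, ← intervalIntegral.integral_of_le (by norm_num)]
  rcases eq_or_ne t 0 with rfl | ht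
  · norm_num
  have hscale := intervalIntegral.smul_integral_comp_mul_left (a := -1 / 2) (b := 1 / 2)
    (fun u : ℝ => Complex.exp (u * Complex.I)) (2 * Real.pi * t)
  have hexp := integral_exp_mul_I_eq_sinc (Real.pi * t)
  have hbound : 2 * Real.pi * t * (1 / 2) = Real.pi * t := by ring
  have hbound' : 2 * Real.pi * t * (-1 / 2) = -(Real.pi * t) := by ring
  rw [hbound, hbound', hexp, Complex.real_smul] at hscale
  have hne : ((2 * Real.pi * t : ℝ) : ℂ) ≠ 0 := by simp [ht, Real.pi_ne_zero]
  refine mul_left_cancel₀ hne (hscale.trans ?_)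
  push_cast
  ring

end FourierInv

section CardinalSeries

open FourierTransform RealInnerProductSpace

attribute [local instance] isProbabilityMeasure_restrict_unitCube

variable {ι : Type*} [Fintype ι]

/-- The character `x ↦ e^{-2πi⟪x, n⟫}` cut off to the unit cube. -/
def cubeChar (n : ι → ℤ) : EuclideanSpace ℝ ι → ℂ :=
  unitCube.indicator fun x => 𝐞 (-⟪x, intVec n⟫)

lemma memLp_cubeChar (n : ι → ℤ) (p : ℝ≥0∞) : MemLp (cubeChar n) p := by
  refine (memLp_indicator_iff_restrict measurableSet_unitCube).2
    (.of_bound (Continuous.aestronglyMeasurable ?_) 1 (.of_forall fun x => ?_))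
  · fun_prop
  · rw [Circle.norm_coe]

lemma indicator_unitCube_one (x : EuclideanSpace ℝ ι) :
    unitCube.indicator (1 : EuclideanSpace ℝ ι → ℂ) x =
      ∏ i, (Set.Ioc (-1 / 2 : ℝ) (1 / 2)).indicator 1 (x i) := by
  by_cases hx : x ∈ unitCube
  · rw [Set.indicator_of_mem hx, Finset.prod_congr rfl fun i _ => Set.indicator_of_mem (hx i) _]
    simp
  · obtain ⟨i, hi⟩ : ∃ i, x i ∉ Set.Ioc (-1 / 2 : ℝ) (1 / 2) := not_forall.1 hx
    rw [Set.indicator_of_notMem hx,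
      Finset.prod_eq_zero (Finset.mem_univ i) (Set.indicator_of_notMem hi _)]

lemma fourierInv_cubeChar {d : ℕ} (n : Fin d → ℤ) (x : EuclideanSpace ℝ (Fin d)) :
    𝓕⁻ (cubeChar n) x = fN d 1 n x := by
  have hmod : cubeChar n = fun v => 𝐞 (-⟪v, intVec n⟫) •
      ∏ i, (Set.Ioc (-1 / 2 : ℝ) (1 / 2)).indicator (1 : ℝ → ℂ) (v i) := by
    ext v
    rw [← indicator_unitCube_one]
    by_cases hv : v ∈ unitCube <;> simp [cubeChar, hv, Circle.smul_def]
  rw [hmod, fourierInv_fourierChar_smul, fourierInv_prod_apply, fN, Complex.ofReal_prod]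
  simp only [fourierInv_indicator_Ioc_one, PiLp.sub_apply, intVec_apply, one_mul]
  rfl

lemma tendsto_eLpNorm_sub_sum_cubeChar {H : EuclideanSpace ℝ ι → ℂ} (hH : MemLp H 2)
    (hsupp : Function.support H ⊆ unitCube) :
    Tendsto (fun s : Finset (ι → ℤ) =>
      eLpNorm (H - ∑ n ∈ s, 𝓕⁻ H (intVec n) • cubeChar n) 2) atTop (𝓝 0) := by
  have hcoeff : ∀ n : ι → ℤ,
      ∫ y in unitCube, 𝐞 ⟪y, intVec n⟫ • H y = 𝓕⁻ H (intVec n) := fun n => by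
    rw [Real.fourierInv_eq]
    refine setIntegral_eq_integral_of_forall_compl_eq_zero fun y hy => ?_
    rw [Function.notMem_support.1 (mt (@hsupp y) hy), smul_zero]
  refine (tendsto_eLpNorm_sub_sum_fourierChar (hH.restrict _)).congr fun s => ?_
  rw [← eLpNorm_indicator_eq_eLpNorm_restrict measurableSet_unitCube]
  congr 1
  ext x
  by_cases hx : x ∈ unitCube
  · simp [hx, hcoeff, cubeChar]
  · simp [hx, Function.notMem_support.1 (mt (@hsupp x) hx), cubeChar]

theorem hasSumL2_fourierInv_mul_fN {d : ℕ} {H : EuclideanSpace ℝ (Fin d) → ℂ} (hH : MemLp H 2)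
    (hsupp : Function.support H ⊆ unitCube) :
    HasSumL2 d (fun n x => 𝓕⁻ H (intVec n) * (fN d 1 n x : ℂ)) (𝓕⁻ H) := by
  have hH1 : Integrable H :=
    (integrableOn_iff_integrable_of_support_subset hsupp).1 ((hH.restrict _).integrable one_le_two)
  have hchar : ∀ n : Fin d → ℤ, Integrable (cubeChar n) := fun n =>
    memLp_one_iff_integrable.1 (memLp_cubeChar n 1)
  refine (tendsto_eLpNorm_sub_sum_cubeChar hH hsupp).congr fun s => ?_
  have hsum1 : ∀ n ∈ s, Integrable (𝓕⁻ H (intVec n) • cubeChar n) := fun n _ =>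
    (hchar n).smul _
  have hsum2 : MemLp (∑ n ∈ s, 𝓕⁻ H (intVec n) • cubeChar n) 2 :=
    memLp_finsetSum' _ fun n _ => (memLp_cubeChar n 2).const_smul _
  rw [← eLpNorm_two_fourierInv (hH1.sub (integrable_finsetSum' _ hsum1)) (hH.sub hsum2),
    fourierInv_sub_of_integrable hH1 (integrable_finsetSum' _ hsum1),
    fourierInv_sum_of_integrable _ hsum1]
  congr 1
  ext x
  simp only [Pi.sub_apply, Finset.sum_apply, fourierInv_const_smul, Pi.smul_apply,
    fourierInv_cubeChar, smul_eq_mul]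

end CardinalSeries

section Aliasing

open FourierTransform RealInnerProductSpace

attribute [local instance] latticeAction measurableConstVAdd_lattice vaddInvariantMeasure_lattice

variable {ι : Type*} {Φ : EuclideanSpace ℝ ι → ℂ} {w : EuclideanSpace ℝ ι → ℝ≥0∞} {A : ℝ≥0∞}

/-- The aliased version of a spectrum `Φ`: its `ℤ^ι`-periodization cut off to the unit cube, which
is what can be recovered of `Φ` from the values of `𝓕⁻ Φ` on the lattice. -/
def aliased (Φ : EuclideanSpace ℝ ι → ℂ) : EuclideanSpace ℝ ι → ℂ :=
  unitCube.indicator (periodization (ι → ℤ) Φ)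

lemma periodization_eq_add_of_mem_unitCube {x : EuclideanSpace ℝ ι} (hx : x ∈ unitCube)
    (hsum : Summable fun n : ι → ℤ => Φ (n +ᵥ x)) :
    periodization (ι → ℤ) Φ x = Φ x + periodization (ι → ℤ) (unitCubeᶜ.indicator Φ) x := by
  classical
  rw [periodization, hsum.tsum_eq_add_tsum_ite 0, zero_vadd, periodization]
  simp only [Set.indicator_apply, Set.mem_compl_iff, vadd_mem_unitCube_iff hx, ite_not]

variable [Fintype ι]

lemma integrable_aliased (hΦ : Integrable Φ) : Integrable (aliased Φ) :=
  (integrable_indicator_iff measurableSet_unitCube).2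
    (integrableOn_periodization isAddFundamentalDomain_unitCube hΦ)

lemma fourierInv_aliased_intVec (hΦ : Integrable Φ) (n : ι → ℤ) :
    𝓕⁻ (aliased Φ) (intVec n) = 𝓕⁻ Φ (intVec n) := by
  calc 𝓕⁻ (aliased Φ) (intVec n)
      = ∫ x in unitCube, 𝐞 ⟪x, intVec n⟫ • periodization (ι → ℤ) Φ x := by
        rw [Real.fourierInv_eq, ← integral_indicator measurableSet_unitCube]
        simp only [aliased, Set.indicator_smul_apply]
    _ = ∫ x in unitCube, periodization (ι → ℤ) (fun y => 𝐞 ⟪y, intVec n⟫ • Φ y) x := by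
        simp only [periodization_smul_of_invariant (χ := fun y => 𝐞 ⟪y, intVec n⟫)
          (fourierChar_inner_vadd n)]
    _ = 𝓕⁻ Φ (intVec n) := by
        rw [integral_periodization isAddFundamentalDomain_unitCube
          (integrable_fourierChar_inner_smul hΦ _), Real.fourierInv_eq]

lemma setLIntegral_sq_sub_aliased_le (hΦ : Integrable Φ) (hw : Measurable w) (hw1 : ∀ x, 1 ≤ w x)
    (hw_top : ∀ x, w x ≠ ∞)
    (hA : ∀ x ∈ unitCube, periodization (ι → ℤ) (unitCubeᶜ.indicator w⁻¹) x ≤ A) :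
    ∫⁻ x in unitCube, ‖(Φ - aliased Φ) x‖ₑ ^ 2 ≤ A * ∫⁻ x in unitCubeᶜ, w x * ‖Φ x‖ₑ ^ 2 := by
  have hmeas : MeasurableSet (unitCube : Set (EuclideanSpace ℝ ι))ᶜ := measurableSet_unitCube.compl
  have hperiodize : ∀ᵐ x ∂volume.restrict unitCube, ‖(Φ - aliased Φ) x‖ₑ ^ 2 =
      ‖periodization (ι → ℤ) (unitCubeᶜ.indicator Φ) x‖ₑ ^ 2 := by
    filter_upwards [ae_summable_vadd (G := ι → ℤ) isAddFundamentalDomain_unitCube hΦ,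
      ae_restrict_mem measurableSet_unitCube] with x hsum hx
    rw [Pi.sub_apply, aliased, Set.indicator_of_mem hx,
      periodization_eq_add_of_mem_unitCube hx hsum, sub_add_cancel_left, enorm_neg]
  rw [lintegral_congr_ae hperiodize, ← lintegral_indicator hmeas]
  refine setLIntegral_sq_periodization_le isAddFundamentalDomain_unitCube measurableSet_unitCube
    ((hw.aemeasurable.mul (hΦ.1.enorm.pow_const 2)).indicator hmeas) (fun x => ?_) hA
  by_cases hx : x ∈ unitCube
  · simp [hx]
  · have hinv : (w x)⁻¹ * w x = 1 :=
      ENNReal.inv_mul_cancel (zero_lt_one.trans_le (hw1 x)).ne' (hw_top x)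
    simp [hx, ← mul_assoc, hinv]

theorem lintegral_sq_sub_aliased_le (hΦ : Integrable Φ) (hw : Measurable w) (hw1 : ∀ x, 1 ≤ w x)
    (hw_top : ∀ x, w x ≠ ∞)
    (hA : ∀ x ∈ unitCube, periodization (ι → ℤ) (unitCubeᶜ.indicator w⁻¹) x ≤ A) :
    ∫⁻ x, ‖(Φ - aliased Φ) x‖ₑ ^ 2 ≤ (1 + A) * ∫⁻ x in unitCubeᶜ, w x * ‖Φ x‖ₑ ^ 2 := by
  rw [← lintegral_add_compl _ measurableSet_unitCube, add_comm, add_mul, one_mul]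
  gcongr ?_ + ?_
  · refine setLIntegral_mono' measurableSet_unitCube.compl fun x hx => ?_
    rw [Pi.sub_apply, aliased, Set.indicator_of_notMem hx, sub_zero]
    exact le_mul_of_one_le_left' (hw1 x)
  · exact setLIntegral_sq_sub_aliased_le hΦ hw hw1 hw_top hA

theorem hasSumL2_fourierInv_aliased {d : ℕ} {Φ : EuclideanSpace ℝ (Fin d) → ℂ}
    (hΦ : Integrable Φ) (hali : MemLp (aliased Φ) 2) :
    HasSumL2 d (fun n x => 𝓕⁻ Φ (intVec n) * (fN d 1 n x : ℂ)) (𝓕⁻ (aliased Φ)) := by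
  simpa only [fourierInv_aliased_intVec hΦ] using
    hasSumL2_fourierInv_mul_fN hali Set.support_indicator_subset

end Aliasing

section SobolevWeight

attribute [local instance] latticeAction measurableConstVAdd_lattice vaddInvariantMeasure_lattice
  isProbabilityMeasure_restrict_unitCube

/-- The weight `(1 + |ξ|²)^s` of the Sobolev space `H^s`. -/
def sobolevWeight {E : Type*} [Norm E] (s : ℝ) (ξ : E) : ℝ≥0∞ :=
  ENNReal.ofReal ((1 + ‖ξ‖ ^ 2) ^ s)

section NormedGroup

variable {E : Type*} [NormedAddCommGroup E] {s : ℝ}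

lemma measurable_sobolevWeight [MeasurableSpace E] [OpensMeasurableSpace E] :
    Measurable (sobolevWeight s : E → ℝ≥0∞) :=
  ENNReal.measurable_ofReal.comp (by fun_prop)

lemma one_le_sobolevWeight (hs : 0 ≤ s) (ξ : E) : 1 ≤ sobolevWeight s ξ :=
  ENNReal.one_le_ofReal.2 (Real.one_le_rpow (by nlinarith [sq_nonneg ‖ξ‖]) hs)

lemma inv_sobolevWeight (s : ℝ) (ξ : E) : (sobolevWeight s ξ)⁻¹ = sobolevWeight (-s) ξ := by
  rw [sobolevWeight, sobolevWeight, ← ENNReal.ofReal_inv_of_pos (by positivity),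
    Real.rpow_neg (by positivity)]

lemma sobolevWeight_neg_anti (hs : 0 ≤ s) {ξ η : E} (h : ‖ξ‖ ≤ ‖η‖) :
    sobolevWeight (-s) η ≤ sobolevWeight (-s) ξ :=
  ENNReal.ofReal_le_ofReal <|
    Real.rpow_le_rpow_of_nonpos (by positivity) (by gcongr) (neg_nonpos.2 hs)

lemma integrable_rpow_neg_one_add_sq [NormedSpace ℝ E] [FiniteDimensional ℝ E] [MeasurableSpace E]
    [BorelSpace E] {μ : Measure E} [μ.IsAddHaarMeasure] (hs : (Module.finrank ℝ E : ℝ) / 2 < s) :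
    Integrable (fun ξ : E => (1 + ‖ξ‖ ^ 2) ^ (-s)) μ := by
  have h := integrable_rpow_neg_one_add_norm_sq (E := E) (μ := μ) (r := 2 * s) (by linarith)
  rwa [neg_div, mul_div_cancel_left₀ s two_ne_zero] at h

end NormedGroup

variable {ι : Type*} [Fintype ι] {x y : EuclideanSpace ℝ ι} {n : ι → ℤ}

lemma one_half_le_norm_of_notMem_unitCube (hx : x ∉ unitCube) : 1 / 2 ≤ ‖x‖ := by
  obtain ⟨i, hi⟩ : ∃ i, x i ∉ Set.Ioc (-1 / 2 : ℝ) (1 / 2) := not_forall.1 hx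
  refine le_trans ?_ (PiLp.norm_apply_le x i)
  by_contra! hlt
  obtain ⟨h1, h2⟩ := abs_lt.1 hlt
  exact hi ⟨by linarith, h2.le⟩

lemma norm_sub_le_of_mem_unitCube (hx : x ∈ unitCube) (hy : y ∈ unitCube) :
    ‖y - x‖ ≤ √(Fintype.card ι) := by
  have hcoord : ∀ i, ‖(y - x) i‖ ^ 2 ≤ 1 := fun i => by
    obtain ⟨⟨hx1, hx2⟩, hy1, hy2⟩ := And.intro (hx i) (hy i)
    rw [Real.norm_eq_abs, sq_abs, sq_le_one_iff_abs_le_one, abs_le, PiLp.sub_apply]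
    constructor <;> linarith
  rw [EuclideanSpace.norm_eq]
  gcongr
  exact (Finset.sum_le_card_nsmul _ _ _ fun i _ => hcoord i).trans_eq (nsmul_one _)

lemma norm_vadd_le_of_mem_unitCube (hx : x ∈ unitCube) (hy : y ∈ unitCube)
    (hn : n +ᵥ x ∉ unitCube) : ‖n +ᵥ y‖ ≤ (1 + 2 * √(Fintype.card ι)) * ‖n +ᵥ x‖ := by
  have hsplit : n +ᵥ y = (n +ᵥ x) + (y - x) := by
    simp only [lattice_vadd_eq]
    abel
  calc ‖n +ᵥ y‖ ≤ ‖n +ᵥ x‖ + √(Fintype.card ι) * 1 := by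
        rw [hsplit, mul_one]
        exact (norm_add_le _ _).trans (by gcongr; exact norm_sub_le_of_mem_unitCube hx hy)
    _ ≤ ‖n +ᵥ x‖ + √(Fintype.card ι) * (2 * ‖n +ᵥ x‖) := by
        gcongr
        linarith [one_half_le_norm_of_notMem_unitCube hn]
    _ = (1 + 2 * √(Fintype.card ι)) * ‖n +ᵥ x‖ := by ring

lemma periodization_indicator_compl_unitCube_le {v u : EuclideanSpace ℝ ι → ℝ≥0∞}
    (h : ∀ n : ι → ℤ, n +ᵥ x ∉ unitCube → ∀ y ∈ unitCube, v (n +ᵥ x) ≤ u (n +ᵥ y)) :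
    periodization (ι → ℤ) (unitCubeᶜ.indicator v) x ≤ ∫⁻ y, u y := by
  rw [isAddFundamentalDomain_unitCube.lintegral_eq_tsum'' (G := ι → ℤ)]
  refine ENNReal.tsum_le_tsum fun n => ?_
  by_cases hn : n +ᵥ x ∈ unitCube
  · simp [hn]
  calc unitCubeᶜ.indicator v (n +ᵥ x) = ∫⁻ _ in unitCube, v (n +ᵥ x) := by simp [hn]
    _ ≤ ∫⁻ y in unitCube, u (n +ᵥ y) := setLIntegral_mono' measurableSet_unitCube (h n hn)

lemma periodization_sobolevWeight_le {s r : ℝ} (hs : 0 ≤ s) (hr : 0 < r) (hx : x ∈ unitCube) :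
    periodization (ι → ℤ) (unitCubeᶜ.indicator fun y => sobolevWeight (-s) (r • y)) x ≤
      ENNReal.ofReal (((1 + 2 * √(Fintype.card ι)) / r) ^ Fintype.card ι) *
        ∫⁻ y : EuclideanSpace ℝ ι, sobolevWeight (-s) y := by
  have hc : 0 < 1 + 2 * √(Fintype.card ι) := by positivity
  have hscale := lintegral_comp_smul (μ := volume) (div_pos hr hc).ne'
    (sobolevWeight (-s) : EuclideanSpace ℝ ι → ℝ≥0∞)
  rw [finrank_euclideanSpace, ← inv_pow, inv_div, abs_of_nonneg (by positivity)] at hscale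
  rw [← hscale]
  refine periodization_indicator_compl_unitCube_le fun n hn y hy => sobolevWeight_neg_anti hs ?_
  rw [norm_smul, norm_smul, Real.norm_of_nonneg hr.le, Real.norm_of_nonneg (by positivity),
    div_mul_eq_mul_div, div_le_iff₀ hc, mul_assoc, mul_comm ‖_‖]
  gcongr
  exact norm_vadd_le_of_mem_unitCube hx hy hn

end SobolevWeight

section UnitaryFourier

open FourierTransform RealInnerProductSpace

lemma integrable_of_integrable_sobolev {E F : Type*} [NormedAddCommGroup E] [NormedSpace ℝ E]
    [FiniteDimensional ℝ E] [MeasurableSpace E] [BorelSpace E] {μ : Measure E}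
    [μ.IsAddHaarMeasure] [NormedAddCommGroup F] {s : ℝ} {g : E → F}
    (hs : (Module.finrank ℝ E : ℝ) / 2 < s) (hg : AEStronglyMeasurable g μ)
    (hint : Integrable (fun ξ => (1 + ‖ξ‖ ^ 2) ^ s * ‖g ξ‖ ^ 2) μ) : Integrable g μ := by
  refine ((integrable_rpow_neg_one_add_sq hs).add hint).mono' hg (.of_forall fun ξ => ?_)
  have hw : 0 < (1 + ‖ξ‖ ^ 2) ^ s := by positivity
  rw [Pi.add_apply, Real.rpow_neg (by positivity)]
  generalize (1 + ‖ξ‖ ^ 2) ^ s = w at hw ⊢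
  -- AM–GM: `‖g‖ ≤ w⁻¹ + w ‖g‖²`.
  have hfactor : w⁻¹ + w * ‖g ξ‖ ^ 2 - ‖g ξ‖ =
      w⁻¹ * ((1 - w * ‖g ξ‖ / 2) ^ 2 + 3 / 4 * (w * ‖g ξ‖) ^ 2) := by
    field
  rw [← sub_nonneg, hfactor]
  positivity

lemma tendsto_eLpNorm_indicator_closedBall_sub {E F : Type*} [PseudoMetricSpace E]
    [MeasurableSpace E] [OpensMeasurableSpace E] {μ : Measure E} [NormedAddCommGroup F]
    {p : ℝ≥0∞} (hp0 : p ≠ 0) (hp : p ≠ ∞) (a : E) {f : E → F} (hf : MemLp f p μ) :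
    Tendsto (fun R : ℝ => eLpNorm ((closedBall a R).indicator f - f) p μ) atTop (𝓝 0) := by
  have hp' : 0 < p.toReal := ENNReal.toReal_pos hp0 hp
  have hlim : Tendsto (fun R : ℝ => ∫⁻ x, ‖((closedBall a R).indicator f - f) x‖ₑ ^ p.toReal ∂μ)
      atTop (𝓝 (∫⁻ _, 0 ∂μ)) := by
    refine tendsto_lintegral_filter_of_dominated_convergence' (fun x => ‖f x‖ₑ ^ p.toReal)
      (.of_forall fun R => ?_) (.of_forall fun R => .of_forall fun x => ?_)
      (lintegral_rpow_enorm_lt_top_of_eLpNorm_lt_top hp0 hp hf.2).ne (.of_forall fun x => ?_)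
    · exact ((hf.1.indicator measurableSet_closedBall).sub hf.1).enorm.pow_const _
    · by_cases hx : x ∈ closedBall a R <;> simp [hx, hp']
    · refine tendsto_const_nhds.congr' ?_
      filter_upwards [eventually_ge_atTop (dist x a)] with R hR
      simp [mem_closedBall.2 hR, hp']
  have hroot := hlim.ennrpow_const (1 / p.toReal)
  rw [lintegral_zero, ENNReal.zero_rpow_of_pos (by positivity)] at hroot
  simpa only [eLpNorm_eq_lintegral_rpow_enorm_toReal hp0 hp] using hroot

variable {d : ℕ} {f fhat : EuclideanSpace ℝ (Fin d) → ℂ}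

lemma fourier_indicator_closedBall_eq (f : EuclideanSpace ℝ (Fin d) → ℂ) (R : ℝ)
    (ξ : EuclideanSpace ℝ (Fin d)) :
    𝓕 ((closedBall 0 R).indicator f) ξ =
      ((2 * Real.pi) ^ ((d : ℝ) / 2)) • truncFT d f R ((2 * Real.pi) • ξ) := by
  rw [truncFT, Complex.real_smul, ← mul_assoc, ← Complex.ofReal_mul,
    ← Real.rpow_add (by positivity), neg_div, add_neg_cancel, Real.rpow_zero, Complex.ofReal_one,
    one_mul, Real.fourier_eq', ← integral_indicator measurableSet_closedBall]
  congr! 2 with v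
  by_cases hv : v ∈ closedBall 0 R
  · simp only [Set.indicator_of_mem hv, smul_eq_mul, inner_smul_right]
    push_cast
    ring_nf
  · simp only [Set.indicator_of_notMem hv, smul_zero]

theorem eq_fourierInv_of_isL2Fourier (hf : Continuous f) (hf2 : MemLp f 2)
    (hF : IsL2Fourier d f fhat) (hF1 : Integrable fhat) :
    f = 𝓕⁻ fun ξ => ((2 * Real.pi) ^ ((d : ℝ) / 2)) • fhat ((2 * Real.pi) • ξ) := by
  have hpi : 2 * Real.pi ≠ 0 := by positivity
  set κ : ℝ := (2 * Real.pi) ^ ((d : ℝ) / 2)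
  have hG1 : Integrable fun ξ => κ • fhat ((2 * Real.pi) • ξ) := (hF1.comp_smul hpi).smul κ
  have hG2 : MemLp (fun ξ => κ • fhat ((2 * Real.pi) • ξ)) 2 :=
    (memLp_comp_smul ENNReal.ofNat_ne_top hpi hF.1).const_smul κ
  refine (hf.ae_eq_iff_eq volume (continuous_fourierInv_of_integrable hG1)).1 <|
    ae_eq_fourierInv_of_tendsto_fourier hf2 hG1 hG2
      (fun R => (integrable_indicator_iff measurableSet_closedBall).2
        (hf.continuousOn.integrableOn_compact (isCompact_closedBall 0 R)))
      (fun R => hf2.indicator measurableSet_closedBall)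
      (tendsto_eLpNorm_indicator_closedBall_sub two_ne_zero ENNReal.ofNat_ne_top 0 hf2) ?_
  have hdiff : ∀ R, 𝓕 ((closedBall 0 R).indicator f) - (fun ξ => κ • fhat ((2 * Real.pi) • ξ)) =
      -(κ • fun ξ => (fun η => fhat η - truncFT d f R η) ((2 * Real.pi) • ξ)) := fun R => by
    ext ξ
    simp only [Pi.sub_apply, Pi.neg_apply, Pi.smul_apply, fourier_indicator_closedBall_eq,
      smul_sub, neg_sub, κ]
  simpa only [hdiff, eLpNorm_neg, eLpNorm_const_smul, mul_zero] using
    ENNReal.Tendsto.const_mul (a := ‖κ‖ₑ)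
      (tendsto_eLpNorm_comp_smul ENNReal.ofNat_ne_top hpi hF.2) (.inr enorm_ne_top)

end UnitaryFourier

section Sampling

open FourierTransform RealInnerProductSpace

attribute [local instance] latticeAction

variable {d : ℕ}

lemma hasSumL2_comp_smul {V : Type} [NormedAddCommGroup V] {r : ℝ} (hr : r ≠ 0)
    {F : (Fin d → ℤ) → EuclideanSpace ℝ (Fin d) → V} {g : EuclideanSpace ℝ (Fin d) → V}
    (h : HasSumL2 d F g) : HasSumL2 d (fun n x => F n (r • x)) fun x => g (r • x) :=
  tendsto_eLpNorm_comp_smul (g := fun t x => g x - ∑ n ∈ t, F n x) ENNReal.ofNat_ne_top hr h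

lemma fN_one_smul (N : ℝ) (n : Fin d → ℤ) (x : EuclideanSpace ℝ (Fin d)) :
    fN d 1 n (N • x) = fN d N n x := by
  simp only [fN, PiLp.smul_apply, smul_eq_mul, one_mul]

lemma inv_smul_intVec (N : ℝ) (n : Fin d → ℤ) : N⁻¹ • intVec n = latticePt d N n := by
  ext i
  simp [latticePt, div_eq_inv_mul]

lemma preimage_smul_Qcube {r : ℝ} (hr : 0 < r) (a : ℝ) :
    (r • ·) ⁻¹' Qcube d (r * a) = Qcube d a := by
  ext x
  refine forall_congr' fun i => ?_
  rw [PiLp.smul_apply, smul_eq_mul, abs_mul, abs_of_pos hr, mul_le_mul_iff_right₀ hr]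

lemma unitCube_ae_eq_Qcube : unitCube =ᵐ[volume] Qcube d (1 / 2) := by
  have hpi : (Set.univ.pi fun _ : Fin d => Set.Ioc (-1 / 2 : ℝ) (1 / 2)) =ᵐ[volume]
      Set.Icc (fun _ => -1 / 2) fun _ => 1 / 2 := Measure.univ_pi_Ioc_ae_eq_Icc
  have hIoc : unitCube = (WithLp.ofLp : EuclideanSpace ℝ (Fin d) → _) ⁻¹'
      Set.univ.pi fun _ => Set.Ioc (-1 / 2 : ℝ) (1 / 2) := by
    ext x
    simp [unitCube]
  have hIcc : Qcube d (1 / 2) = WithLp.ofLp ⁻¹' Set.Icc (fun _ => -1 / 2) fun _ => 1 / 2 := by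
    ext x
    simp [Qcube, abs_le, Pi.le_def, forall_and, neg_div]
  rw [hIoc, hIcc]
  exact (PiLp.volume_preserving_ofLp (Fin d)).quasiMeasurePreserving.preimage_ae_eq hpi

lemma setLIntegral_compl_unitCube_comp_smul {r : ℝ} (hr : 0 < r)
    (g : EuclideanSpace ℝ (Fin d) → ℝ≥0∞) :
    ∫⁻ x in unitCubeᶜ, g (r • x) =
      ENNReal.ofReal (r ^ d)⁻¹ * ∫⁻ ξ in (Qcube d (r * (1 / 2)))ᶜ, g ξ := by
  rw [setLIntegral_congr unitCube_ae_eq_Qcube.compl, ← preimage_smul_Qcube hr,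
    ← Set.preimage_compl, setLIntegral_comp_smul hr.ne', finrank_euclideanSpace, Fintype.card_fin,
    abs_of_pos (by positivity)]

/-- The constant `B` for which aliasing at sampling rate `N` costs at most a factor
`1 + B N^{-d}` in the squared `L²` norm. -/
def aliasingConst (d : ℕ) (s : ℝ) : ℝ :=
  ((1 + 2 * √d) / (2 * Real.pi)) ^ d * ∫ ξ : EuclideanSpace ℝ (Fin d), (1 + ‖ξ‖ ^ 2) ^ (-s)

lemma aliasingConst_nonneg (d : ℕ) (s : ℝ) : 0 ≤ aliasingConst d s := by
  unfold aliasingConst; positivity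

lemma periodization_sobolevWeight_le_aliasingConst {s N : ℝ} (hs : (d : ℝ) / 2 < s) (hN : 0 < N)
    {x : EuclideanSpace ℝ (Fin d)} (hx : x ∈ unitCube) :
    periodization (Fin d → ℤ)
        (unitCubeᶜ.indicator fun y => sobolevWeight (-s) ((2 * Real.pi * N) • y)) x ≤
      ENNReal.ofReal (aliasingConst d s * (N ^ d)⁻¹) := by
  have hs0 : 0 ≤ s := (by positivity : (0 : ℝ) ≤ d / 2).trans hs.le
  refine (periodization_sobolevWeight_le hs0 (by positivity) hx).trans_eq ?_
  simp only [sobolevWeight]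
  rw [← ofReal_integral_eq_lintegral_ofReal (integrable_rpow_neg_one_add_sq (by simpa using hs))
    (.of_forall fun y => by positivity), ← ENNReal.ofReal_mul (by positivity), aliasingConst,
    Fintype.card_fin, ← div_div, div_pow _ N]
  congr 1
  ring

theorem exists_remainder_of_integrable {Φ : EuclideanSpace ℝ (Fin d) → ℂ} {s N : ℝ}
    (hs : (d : ℝ) / 2 < s) (hN : 0 < N) (hΦ1 : Integrable Φ) (hΦ2 : MemLp Φ 2)
    (hfin : ∫⁻ x in unitCubeᶜ, sobolevWeight s ((2 * Real.pi * N) • x) * ‖Φ x‖ₑ ^ 2 ≠ ∞) :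
    ∃ R, MemLp R 2 ∧
      ∫⁻ x, ‖R x‖ₑ ^ 2 ≤ ENNReal.ofReal (1 + aliasingConst d s * (N ^ d)⁻¹) *
        ∫⁻ x in unitCubeᶜ, sobolevWeight s ((2 * Real.pi * N) • x) * ‖Φ x‖ₑ ^ 2 ∧
      HasSumL2 d (fun n x => 𝓕⁻ Φ (intVec n) * (fN d 1 n x : ℂ)) (𝓕⁻ Φ - R) := by
  have hs0 : 0 ≤ s := (by positivity : (0 : ℝ) ≤ d / 2).trans hs.le
  have hB : 0 ≤ aliasingConst d s * (N ^ d)⁻¹ :=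
    mul_nonneg (aliasingConst_nonneg d s) (by positivity)
  have hbound := lintegral_sq_sub_aliased_le hΦ1
    (measurable_sobolevWeight.comp (measurable_const_smul (2 * Real.pi * N)))
    (fun x => one_le_sobolevWeight hs0 _) (fun x => ENNReal.ofReal_ne_top) fun x hx => by
      simpa only [Pi.inv_def, Function.comp_apply, inv_sobolevWeight] using
        periodization_sobolevWeight_le_aliasingConst hs hN hx
  rw [← ENNReal.ofReal_one, ← ENNReal.ofReal_add zero_le_one hB] at hbound
  have hdiff1 : Integrable (Φ - aliased Φ) := hΦ1.sub (integrable_aliased hΦ1)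
  have hdiff2 : MemLp (Φ - aliased Φ) 2 := (memLp_two_iff_lintegral_sq_ne_top hdiff1.1).2
    (ne_top_of_le_ne_top (ENNReal.mul_ne_top ENNReal.ofReal_ne_top hfin) hbound)
  refine ⟨𝓕⁻ (Φ - aliased Φ), memLp_two_fourierInv hdiff1 hdiff2, ?_, ?_⟩
  · rwa [← eLpNorm_two_sq_eq_lintegral, eLpNorm_two_fourierInv hdiff1 hdiff2,
      eLpNorm_two_sq_eq_lintegral]
  · rw [fourierInv_sub_of_integrable hΦ1 (integrable_aliased hΦ1), sub_sub_self]
    refine hasSumL2_fourierInv_aliased hΦ1 ?_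
    simpa only [sub_sub_self] using hΦ2.sub hdiff2

lemma sq_pow_mul_rpow_div_eq {N : ℝ} (hN : 0 < N) :
    (N ^ d * (2 * Real.pi) ^ ((d : ℝ) / 2)) ^ 2 * ((2 * Real.pi * N) ^ d)⁻¹ = N ^ d := by
  have hκ : ((2 * Real.pi) ^ ((d : ℝ) / 2)) ^ 2 = (2 * Real.pi) ^ d := by
    rw [← Real.rpow_mul_natCast (by positivity), Nat.cast_two, div_mul_cancel₀ _ two_ne_zero,
      Real.rpow_natCast]
  rw [mul_pow, hκ, mul_pow (2 * Real.pi)]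
  field

/-- The spectrum of `f (· / N)`, for the Fourier transform `𝓕` with kernel `e^{-2πi⟪x, ξ⟫}`, in
terms of the unitary Fourier transform `fhat` of `f`. -/
def rescaledSpectrum (N : ℝ) (fhat : EuclideanSpace ℝ (Fin d) → ℂ) :
    EuclideanSpace ℝ (Fin d) → ℂ :=
  (N ^ d * (2 * Real.pi) ^ ((d : ℝ) / 2)) • fun ξ => fhat ((2 * Real.pi * N) • ξ)

variable {f fhat : EuclideanSpace ℝ (Fin d) → ℂ} {N s : ℝ}

lemma integrable_rescaledSpectrum (hN : 0 < N) (hF : Integrable fhat) :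
    Integrable (rescaledSpectrum N fhat) :=
  (hF.comp_smul (by positivity)).smul _

lemma memLp_rescaledSpectrum (hN : 0 < N) (hF : MemLp fhat 2) :
    MemLp (rescaledSpectrum N fhat) 2 :=
  (memLp_comp_smul ENNReal.ofNat_ne_top (by positivity) hF).const_smul _

lemma fourierInv_rescaledSpectrum (hN : 0 < N) (hf : Continuous f) (hf2 : MemLp f 2)
    (hF : IsL2Fourier d f fhat) (hF1 : Integrable fhat) (x : EuclideanSpace ℝ (Fin d)) :
    𝓕⁻ (rescaledSpectrum N fhat) x = f (N⁻¹ • x) := by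
  conv_rhs => rw [eq_fourierInv_of_isL2Fourier hf hf2 hF hF1, ← fourierInv_fun_comp_smul hN,
    finrank_euclideanSpace, Fintype.card_fin]
  congr! 1
  ext ξ
  simp only [rescaledSpectrum, Pi.smul_apply, smul_smul]

lemma setLIntegral_rescaledSpectrum (hN : 0 < N) (fhat : EuclideanSpace ℝ (Fin d) → ℂ) :
    ∫⁻ x in unitCubeᶜ,
        sobolevWeight s ((2 * Real.pi * N) • x) * ‖rescaledSpectrum N fhat x‖ₑ ^ 2 =
      ENNReal.ofReal (N ^ d) *
        ∫⁻ ξ in (Qcube d (Real.pi * N))ᶜ, sobolevWeight s ξ * ‖fhat ξ‖ₑ ^ 2 := by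
  simp only [rescaledSpectrum, Pi.smul_apply, enorm_smul, mul_pow,
    mul_left_comm (sobolevWeight _ _)]
  rw [lintegral_const_mul' _ _ (by finiteness),
    setLIntegral_compl_unitCube_comp_smul (by positivity)
      fun ξ => sobolevWeight s ξ * ‖fhat ξ‖ₑ ^ 2, ← mul_assoc, Real.enorm_of_nonneg (by positivity),
    ← ENNReal.ofReal_pow (by positivity), ← ENNReal.ofReal_mul (by positivity),
    sq_pow_mul_rpow_div_eq hN]
  congr! 5
  ring

lemma setLIntegral_sobolevWeight_mul_enorm_sq
    (hint : Integrable fun ξ => (1 + ‖ξ‖ ^ 2) ^ s * ‖fhat ξ‖ ^ 2)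
    (S : Set (EuclideanSpace ℝ (Fin d))) :
    ∫⁻ ξ in S, sobolevWeight s ξ * ‖fhat ξ‖ₑ ^ 2 =
      ENNReal.ofReal (∫ ξ in S, (1 + ‖ξ‖ ^ 2) ^ s * ‖fhat ξ‖ ^ 2) := by
  rw [ofReal_integral_eq_lintegral_ofReal hint.integrableOn (.of_forall fun ξ => by positivity)]
  refine lintegral_congr fun ξ => ?_
  rw [sobolevWeight, ENNReal.ofReal_mul (by positivity), ENNReal.ofReal_pow (norm_nonneg _),
    ofReal_norm]

theorem exists_sampling_remainder (hs : (d : ℝ) / 2 < s) (hN : 0 < N) (hf : Continuous f)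
    (hf2 : MemLp f 2) (hF : IsL2Fourier d f fhat)
    (hint : Integrable fun ξ => (1 + ‖ξ‖ ^ 2) ^ s * ‖fhat ξ‖ ^ 2) :
    ∃ R, MemLp R 2 ∧
      ∫⁻ x, ‖R x‖ₑ ^ 2 ≤ ENNReal.ofReal (1 + aliasingConst d s * (N ^ d)⁻¹) *
        ENNReal.ofReal (∫ ξ in (Qcube d (Real.pi * N))ᶜ, (1 + ‖ξ‖ ^ 2) ^ s * ‖fhat ξ‖ ^ 2) ∧
      HasSumL2 d (fun n x => f (latticePt d N n) * (fN d N n x : ℂ)) fun x => f x - R x := by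
  have hF1 : Integrable fhat := integrable_of_integrable_sobolev (by simpa using hs) hF.1.1 hint
  have hspec := setLIntegral_rescaledSpectrum (s := s) hN fhat
  rw [setLIntegral_sobolevWeight_mul_enorm_sq hint] at hspec
  obtain ⟨R, hR, hRbound, hRsum⟩ := exists_remainder_of_integrable hs hN
    (integrable_rescaledSpectrum hN hF1) (memLp_rescaledSpectrum hN hF.1)
    (hspec ▸ ENNReal.mul_ne_top ENNReal.ofReal_ne_top ENNReal.ofReal_ne_top)
  refine ⟨fun x => R (N • x), memLp_comp_smul ENNReal.ofNat_ne_top hN.ne' hR, ?_, ?_⟩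
  · have hcancel : ENNReal.ofReal (N ^ d)⁻¹ * ENNReal.ofReal (N ^ d) = 1 := by
      rw [← ENNReal.ofReal_mul (by positivity), inv_mul_cancel₀ (by positivity),
        ENNReal.ofReal_one]
    rw [lintegral_comp_smul hN.ne' fun x => ‖R x‖ₑ ^ 2, finrank_euclideanSpace, Fintype.card_fin,
      abs_of_pos (by positivity)]
    refine (mul_le_mul_right hRbound _).trans_eq ?_
    rw [hspec, mul_left_comm, ← mul_assoc (ENNReal.ofReal (N ^ d)⁻¹), hcancel, one_mul]
  · simpa only [Pi.sub_apply, fourierInv_rescaledSpectrum hN hf hf2 hF hF1, inv_smul_intVec,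
      fN_one_smul, inv_smul_smul₀ hN.ne'] using hasSumL2_comp_smul hN.ne' hRsum

lemma l2norm_le_of_lintegral_sq_le {V : Type} [NormedAddCommGroup V]
    {R : EuclideanSpace ℝ (Fin d) → V} {M : ℝ} (hM : 0 ≤ M)
    (h : ∫⁻ x, ‖R x‖ₑ ^ 2 ≤ ENNReal.ofReal (M ^ 2)) : l2norm d R ≤ M := by
  rw [← eLpNorm_two_sq_eq_lintegral, ENNReal.ofReal_pow hM, ENNReal.pow_le_pow_left_iff two_ne_zero]
    at h
  exact ENNReal.toReal_le_of_le_ofReal hM h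

lemma one_add_mul_inv_pow_le {B : ℝ} (hB : 0 ≤ B) (hN : 0 < N) :
    1 + B * (N ^ d)⁻¹ ≤ ((1 + √B) * (1 + N ^ (-(d : ℝ) / 2))) ^ 2 := by
  set t : ℝ := N ^ (-(d : ℝ) / 2) with ht
  have ht2 : (N ^ d)⁻¹ = t ^ 2 := by
    rw [ht, ← Real.rpow_mul_natCast hN.le, Nat.cast_two, div_mul_cancel₀ _ two_ne_zero,
      Real.rpow_neg hN.le, Real.rpow_natCast]
  calc 1 + B * (N ^ d)⁻¹ = 1 + (√B * t) ^ 2 := by rw [ht2, mul_pow, Real.sq_sqrt hB]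
    _ ≤ (1 + √B * t + (√B + t)) ^ 2 := by
      have h0 : 0 ≤ √B * t := by positivity
      have h1 : 0 ≤ √B + t := by positivity
      nlinarith [mul_nonneg h0 h1]
    _ = ((1 + √B) * (1 + t)) ^ 2 := by ring

end Sampling

/-- Given `s > d/2`, there is `C = C(s,d) > 0` such that for every continuous `f ∈ L²(ℝ^d)`
with `∫ (1+|ξ|²)^s |f̂(ξ)|² dξ < ∞` and every `N > 0`, there is `R ∈ L²(ℝ^d)` with
`‖R‖ ≤ C (1 + N^{-d/2}) (∫_{ξ ∉ Q_{πN}(0)} (1+|ξ|²)^s |f̂(ξ)|² dξ)^{1/2}` and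
`f = Σ_{n ∈ ℤ^d} f(n/N) f_{N,n} + R` in `L²(ℝ^d)`. -/
theorem statement5 (d : ℕ) (hd : 0 < d) (s : ℝ) (hs : (d : ℝ) / 2 < s) :
    ∃ C : ℝ, 0 < C ∧
      ∀ f fhat : EuclideanSpace ℝ (Fin d) → ℂ,
        Continuous f → MemLp f 2 volume → IsL2Fourier d f fhat →
        Integrable (fun ξ => (1 + ‖ξ‖ ^ 2) ^ s * ‖fhat ξ‖ ^ 2) volume →
        ∀ N : ℝ, 0 < N →
        ∃ R : EuclideanSpace ℝ (Fin d) → ℂ, MemLp R 2 volume ∧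
          l2norm d R ≤ C * (1 + N ^ (-(d : ℝ) / 2)) *
            Real.sqrt (∫ ξ in (Qcube d (Real.pi * N))ᶜ, (1 + ‖ξ‖ ^ 2) ^ s * ‖fhat ξ‖ ^ 2) ∧
          HasSumL2 d (fun n x => f (latticePt d N n) * (fN d N n x : ℂ))
            (fun x => f x - R x) := by
  refine ⟨1 + √(aliasingConst d s), by positivity, ?_⟩
  intro f fhat hf hf2 hF hint N hN
  set I : ℝ := ∫ ξ in (Qcube d (Real.pi * N))ᶜ, (1 + ‖ξ‖ ^ 2) ^ s * ‖fhat ξ‖ ^ 2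
  have hI : 0 ≤ I := integral_nonneg fun ξ => by positivity
  obtain ⟨R, hR, hRbound, hRsum⟩ := exists_sampling_remainder hs hN hf hf2 hF hint
  refine ⟨R, hR, l2norm_le_of_lintegral_sq_le (by positivity) (hRbound.trans ?_), hRsum⟩
  rw [← ENNReal.ofReal_mul' hI, mul_pow, Real.sq_sqrt hI]
  gcongr
  exact one_add_mul_inv_pow_le (aliasingConst_nonneg d s) hN
end
end
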